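/- arXiv:math/0211380 — 10 statements merged into one kernel-verified Lean document; each statement's English description precedes it below -/
import Mathlib

section
/- For integers m ≥ 0 and k ≥ 1, one has ∑_{j=0}^{min(m, k−m−1)} C^{(k−2j)}_j = C(k−1, m). -/
/-!
For `2 j ≤ k - 1` the top entry `2 j + (k - 2 j) - 1` equals `k - 1`, whatever `j` is, so the summand
is `C(k-1, j) - C(k-1, j-1)` and the sum up to `M = min(m, k-m-1)` telescopes to `C(k-1, M)`
(`sum_ballot_eq_choose`). Symmetry of binomial coefficients turns this into `C(k-1, m)`.
For `k ≤ m` both sides vanish.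
-/

/-- The ballot number `C^{(k)}_n = C(2n+k-1, n) - C(2n+k-1, n-1)`, with `C(a,-1) = 0`. -/
def ballot (k n : ℕ) : ℕ :=
  Nat.choose (2 * n + k - 1) n - (if n = 0 then 0 else Nat.choose (2 * n + k - 1) (n - 1))

/-- The telescoping sum. The condition `2 * M ≤ n` keeps `n + 1 - 2 * j` positive and keeps all `j` in
the increasing half of row `n`, so that no natural-number subtraction truncates. -/
theorem sum_ballot_eq_choose (n M : ℕ) (h : 2 * M ≤ n) :
    ∑ j ∈ Finset.range (M + 1), ballot (n + 1 - 2 * j) j = Nat.choose n M := by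
  induction M with
  | zero => simp [ballot]
  | succ M ih =>
    rw [Finset.sum_range_succ, ih (by omega)]
    have hrow : 2 * (M + 1) + (n + 1 - 2 * (M + 1)) - 1 = n := by omega
    have hle : Nat.choose n M ≤ Nat.choose n (M + 1) :=
      Nat.choose_le_succ_of_lt_half_left (by omega)
    simp only [ballot, hrow, Nat.add_sub_cancel, Nat.succ_ne_zero, if_false]
    omega

/-- For `m ≥ 0` and `k ≥ 1`, `∑_{j=0}^{min(m, k-m-1)} C^{(k-2j)}_j = C(k-1, m)`.
The sum is over the integers `j` with `0 ≤ j ≤ m` and `j ≤ k - m - 1` (so it is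
empty when `k - m - 1 < 0`). -/
theorem ballot_telescoping_sum (m k : ℕ) (hk : 1 ≤ k) :
    ∑ j ∈ (Finset.range (m + 1)).filter
        (fun j : ℕ => (j : ℤ) ≤ (k : ℤ) - (m : ℤ) - 1),
      ballot (k - 2 * j) j = Nat.choose (k - 1) m := by
  obtain ⟨n, rfl⟩ : ∃ n, k = n + 1 := ⟨k - 1, by omega⟩
  rw [Nat.add_sub_cancel]
  rcases Nat.lt_or_ge n m with hnm | hmn
  · rw [Nat.choose_eq_zero_of_lt hnm, Finset.filter_false_of_mem, Finset.sum_empty]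
    intro j _
    omega
  · have hset : (Finset.range (m + 1)).filter
        (fun j : ℕ => (j : ℤ) ≤ ((n + 1 : ℕ) : ℤ) - (m : ℤ) - 1)
          = Finset.range (min m (n - m) + 1) := by
      ext j
      simp only [Finset.mem_filter, Finset.mem_range]
      omega
    rw [hset, sum_ballot_eq_choose n _ (by omega)]
    rcases min_choice m (n - m) with h | h <;> rw [h]
    exact Nat.choose_symm hmn
end

section
/- For integers n ≥ 0 and k ≥ 0, one has ∑_{j=0}^{n} C^{(k+j)}_{n−j} = C^{(k+1)}_n, where by convention C^{(0)}_n = 1 if n = 0 and C^{(0)}_n = 0 if n ≥ 1. -/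
/-- Unlike `Nat.choose_le_succ_of_lt_half_left`, this includes the case `m = 2 * r + 1`, where the
two middle coefficients agree; it is needed for `k = 0`. -/
theorem choose_le_choose_succ {m r : ℕ} (h : 2 * r + 1 ≤ m) :
    m.choose r ≤ m.choose (r + 1) := by
  refine Nat.le_of_mul_le_mul_right ?_ r.succ_pos
  rw [Nat.succ_eq_add_one, Nat.choose_succ_right_eq]
  exact Nat.mul_le_mul_left _ (by omega)

theorem ballot_zero_right (k : ℕ) : ballot k 0 = 1 := by
  simp [ballot]

theorem ballot_succ_right (k n : ℕ) :
    ballot k (n + 1) = (2 * n + k + 1).choose (n + 1) - (2 * n + k + 1).choose n := by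
  have h : 2 * (n + 1) + k - 1 = 2 * n + k + 1 := by omega
  simp [ballot, h]

theorem ballot_succ_succ (k n : ℕ) :
    ballot (k + 1) (n + 1) = ballot k (n + 1) + ballot (k + 2) n := by
  cases n with
  | zero =>
    simp [ballot_succ_right, ballot_zero_right]
  | succ n =>
    simp only [ballot_succ_right]
    have e₁ : 2 * (n + 1) + (k + 1) + 1 = (2 * n + k + 3) + 1 := by ring
    have e₂ : 2 * (n + 1) + k + 1 = 2 * n + k + 3 := by ring
    have e₃ : 2 * n + (k + 2) + 1 = 2 * n + k + 3 := by ring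
    rw [e₁, e₂, e₃, Nat.choose_succ_succ' (2 * n + k + 3) (n + 1),
      Nat.choose_succ_succ' (2 * n + k + 3) n]
    have h₁ := choose_le_choose_succ (m := 2 * n + k + 3) (r := n) (by omega)
    have h₂ := choose_le_choose_succ (m := 2 * n + k + 3) (r := n + 1) (by omega)
    omega

/-- For `n ≥ 0` and `k ≥ 0`, `∑_{j=0}^{n} C^{(k+j)}_{n-j} = C^{(k+1)}_n`. -/
theorem ballot_diag_sum (n k : ℕ) :
    ∑ j ∈ Finset.range (n + 1), ballot (k + j) (n - j) = ballot (k + 1) n := by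
  induction n generalizing k with
  | zero => simp [ballot_zero_right]
  | succ n ih =>
    have h : ∀ j, ballot (k + (j + 1)) (n + 1 - (j + 1)) = ballot (k + 1 + j) (n - j) := fun j => by
      rw [Nat.add_sub_add_right, Nat.add_right_comm, Nat.add_assoc]
    rw [Finset.sum_range_succ', Finset.sum_congr rfl fun j _ => h j, ih (k + 1), ballot_succ_succ,
      Nat.add_comm]
    rfl
end

section
/- For integers n ≥ k ≥ 1, the number of Dyck n-paths whose first ascent equals k is C^{(k)}_{n−k}, and the number of Dyck n-paths whose first ascent is ≥ k is C^{(k+1)}_{n−k}. -/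
/-- A path (word in upsteps `true` and downsteps `false`) stays weakly in the
first quadrant: every prefix has at least as many upsteps as downsteps. -/
def IsFirstQuadrant (p : List Bool) : Prop :=
  ∀ t : ℕ, (p.take t).count false ≤ (p.take t).count true

/-- A Dyck `n`-path: a first-quadrant path with `n` upsteps and `n` downsteps. -/
def IsDyck (n : ℕ) (p : List Bool) : Prop :=
  p.count true = n ∧ p.count false = n ∧ IsFirstQuadrant p

/-- The first ascent of a path: the length of its maximal initial run of upsteps. -/
def firstAscent (p : List Bool) : ℕ := (p.takeWhile (fun b => b)).length

/-- `p`, read as a path starting at height `h`, has `u` upsteps, ends at height `0` and stays at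
nonnegative height. -/
def IsDescent (u h : ℕ) (p : List Bool) : Prop :=
  p.count true = u ∧ p.count false = u + h ∧
    ∀ t : ℕ, (p.take t).count false ≤ h + (p.take t).count true

lemma isDyck_iff (n : ℕ) (p : List Bool) : IsDyck n p ↔ IsDescent n 0 p := by
  simp [IsDyck, IsDescent, IsFirstQuadrant]

lemma isDescent_nil (u h : ℕ) : IsDescent u h [] ↔ u = 0 ∧ h = 0 := by
  simp only [IsDescent, List.count_nil, List.take_nil]
  constructor
  · rintro ⟨h1, h2, -⟩; omega
  · rintro ⟨rfl, rfl⟩; simp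

lemma isDescent_true_cons (u h : ℕ) (p : List Bool) :
    IsDescent u h (true :: p) ↔ 1 ≤ u ∧ IsDescent (u - 1) (h + 1) p := by
  constructor
  · rintro ⟨h1, h2, h3⟩
    simp at h1 h2
    refine ⟨by omega, by omega, by omega, fun t => ?_⟩
    have := h3 (t + 1)
    simp at this
    omega
  · rintro ⟨h0, h1, h2, h3⟩
    refine ⟨by simp; omega, by simp; omega, fun t => ?_⟩
    cases t with
    | zero => simp
    | succ t =>
      have := h3 t
      simp
      omega

lemma isDescent_false_cons (u h : ℕ) (p : List Bool) :
    IsDescent u h (false :: p) ↔ 1 ≤ h ∧ IsDescent u (h - 1) p := by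
  constructor
  · rintro ⟨h1, h2, h3⟩
    simp at h1 h2
    have h4 := h3 1
    simp at h4
    refine ⟨h4, by omega, by omega, fun t => ?_⟩
    have := h3 (t + 1)
    simp at this
    omega
  · rintro ⟨h0, h1, h2, h3⟩
    refine ⟨by simp; omega, by simp; omega, fun t => ?_⟩
    cases t with
    | zero => simp
    | succ t =>
      have := h3 t
      simp
      omega

lemma isDescent_replicate_append (k u h : ℕ) (q : List Bool) :
    IsDescent u h (List.replicate k true ++ q) ↔ k ≤ u ∧ IsDescent (u - k) (h + k) q := by
  induction k generalizing u h with
  | zero => simp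
  | succ k ih =>
    rw [List.replicate_succ, List.cons_append, isDescent_true_cons, ih, ← and_assoc,
      Nat.sub_sub, add_assoc, add_comm 1 k]
    apply and_congr_left'
    omega

/-- The finite set of paths satisfying `IsDescent u h`, generated by the choice of first step. -/
def descents : ℕ → ℕ → Finset (List Bool)
  | 0, 0 => {[]}
  | 0, h + 1 => (descents 0 h).image (List.cons false)
  | u + 1, 0 => (descents u 1).image (List.cons true)
  | u + 1, h + 1 => (descents u (h + 2)).image (List.cons true) ∪
      (descents (u + 1) h).image (List.cons false)
  termination_by u h => 2 * u + h

lemma mem_descents (u h : ℕ) (p : List Bool) : p ∈ descents u h ↔ IsDescent u h p := by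
  induction u, h using descents.induct generalizing p <;> rw [descents] <;>
    rcases p with _ | ⟨_ | _, p⟩ <;>
    simp_all [isDescent_nil, isDescent_true_cons, isDescent_false_cons]

/-- The binomial coefficient `C(N, u - 1)`, with `C(N, -1) = 0`. -/
def choosePred (N : ℕ) : ℕ → ℕ
  | 0 => 0
  | u + 1 => N.choose u

lemma choosePred_succ_succ (N u : ℕ) :
    choosePred (N + 1) (u + 1) = choosePred N u + N.choose u := by
  cases u with
  | zero => simp [choosePred]
  | succ u => exact Nat.choose_succ_succ N u

/-- The ballot theorem, stated without subtraction. -/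
lemma card_descents (u h : ℕ) :
    (descents u h).card + choosePred (2 * u + h) u = (2 * u + h).choose u := by
  induction u, h using descents.induct with
  | case1 => simp [descents, choosePred]
  | case2 h ih =>
    rw [descents, Finset.card_image_of_injective _ List.cons_injective]
    simpa [choosePred] using ih
  | case3 u ih =>
    rw [descents, Finset.card_image_of_injective _ List.cons_injective,
      show 2 * (u + 1) + 0 = (2 * u + 1) + 1 by ring, choosePred_succ_succ, Nat.choose_succ_succ]
    have := Nat.choose_symm_half u
    simp only [Nat.succ_eq_add_one]
    omega
  | case4 u h ih1 ih2 =>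
    rw [descents, Finset.card_union_of_disjoint,
      Finset.card_image_of_injective _ List.cons_injective,
      Finset.card_image_of_injective _ List.cons_injective,
      show 2 * (u + 1) + (h + 1) = (2 * u + (h + 2)) + 1 by ring, choosePred_succ_succ,
      Nat.choose_succ_succ]
    · rw [show 2 * (u + 1) + h = 2 * u + (h + 2) by ring] at ih2
      simp only [choosePred.eq_2, Nat.succ_eq_add_one] at ih2 ⊢
      omega
    · rw [Finset.disjoint_left]
      simp

lemma card_descents_eq_ballot (u h : ℕ) : (descents u h).card = ballot (h + 1) u := by
  have := card_descents u h
  rw [ballot, show 2 * u + (h + 1) - 1 = 2 * u + h by omega]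
  cases u <;> simp [choosePred] at this ⊢ <;> omega

lemma le_firstAscent_iff (k : ℕ) (p : List Bool) :
    k ≤ firstAscent p ↔ ∃ q, p = List.replicate k true ++ q := by
  induction k generalizing p with
  | zero => simp
  | succ k ih =>
    rcases p with _ | ⟨_ | _, p⟩
    · simp [firstAscent]
    · simp [firstAscent, List.replicate_succ]
    · have := ih p
      simp_all [firstAscent, List.replicate_succ]

lemma firstAscent_replicate_append (k : ℕ) (q : List Bool) :
    firstAscent (List.replicate k true ++ q) = k + firstAscent q := by
  induction k with
  | zero => simp
  | succ k ih =>
    simp only [firstAscent, List.replicate_succ, List.cons_append, List.takeWhile_cons] at ih ⊢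
    simp
    omega

lemma isDyck_le_firstAscent_iff (n k : ℕ) (hkn : k ≤ n) (p : List Bool) :
    IsDyck n p ∧ k ≤ firstAscent p ↔
      p ∈ (descents (n - k) k).image (List.replicate k true ++ ·) := by
  simp only [Finset.mem_image, mem_descents, le_firstAscent_iff, isDyck_iff]
  constructor
  · rintro ⟨hp, q, rfl⟩
    rw [isDescent_replicate_append, zero_add] at hp
    exact ⟨q, hp.2, rfl⟩
  · rintro ⟨q, hq, rfl⟩
    refine ⟨?_, q, rfl⟩
    rw [isDescent_replicate_append, zero_add]
    exact ⟨hkn, hq⟩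

lemma isDyck_firstAscent_eq_iff (n k : ℕ) (hk : 1 ≤ k) (hkn : k ≤ n) (p : List Bool) :
    IsDyck n p ∧ firstAscent p = k ↔
      p ∈ (descents (n - k) (k - 1)).image (fun q => List.replicate k true ++ false :: q) := by
  simp only [Finset.mem_image, mem_descents, isDyck_iff]
  constructor
  · rintro ⟨hp, hf⟩
    obtain ⟨q, rfl⟩ := (le_firstAscent_iff k p).1 hf.ge
    rw [isDescent_replicate_append, zero_add] at hp
    rw [firstAscent_replicate_append] at hf
    rcases q with _ | ⟨_ | _, q⟩
    · -- `U^k` alone ends at height `k ≥ 1`.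
      have := ((isDescent_nil _ _).1 hp.2).2
      omega
    · exact ⟨q, ((isDescent_false_cons _ _ _).1 hp.2).2, rfl⟩
    · simp [firstAscent] at hf
  · rintro ⟨q, hq, rfl⟩
    rw [isDescent_replicate_append, zero_add, isDescent_false_cons, firstAscent_replicate_append]
    exact ⟨⟨hkn, hk, hq⟩, by simp [firstAscent]⟩

/-- For `n ≥ k ≥ 1`, the number of Dyck `n`-paths with first ascent `= k` is
`C^{(k)}_{n-k}`, and the number with first ascent `≥ k` is `C^{(k+1)}_{n-k}`. -/
theorem dyck_firstAscent_count (n k : ℕ) (hk : 1 ≤ k) (hkn : k ≤ n) :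
    Nat.card {p : List Bool // IsDyck n p ∧ firstAscent p = k} = ballot k (n - k) ∧
    Nat.card {p : List Bool // IsDyck n p ∧ k ≤ firstAscent p} = ballot (k + 1) (n - k) := by
  constructor
  · rw [Nat.card_congr (Equiv.subtypeEquivRight (isDyck_firstAscent_eq_iff n k hk hkn)),
      Nat.card_eq_fintype_card, Fintype.card_coe, Finset.card_image_of_injective,
      card_descents_eq_ballot, Nat.sub_add_cancel hk]
    intro a b hab
    simpa using hab
  · rw [Nat.card_congr (Equiv.subtypeEquivRight (isDyck_le_firstAscent_iff n k hkn)),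
      Nat.card_eq_fintype_card, Fintype.card_coe, Finset.card_image_of_injective,
      card_descents_eq_ballot]
    intro a b hab
    simpa using hab
end

section
/- For every integer m ≥ 1, one has ∑_{k=0}^{m−1} C(2m−2k, m−1−k)·C_k = C(2m+1, m−1), where C_k is the k-th Catalan number and C(a,b) denotes the binomial coefficient. -/
/-!
Write `T n = ∑_{k ≤ n} C(2(n-k), n-k) C_k`. Since `C(2j, j) = (j+1) C_j`, averaging this sum with
its reflection `k ↦ n - k` and using the Catalan recurrence gives
`2 T n = (n+2) C_{n+1} = C(2n+2, n+1)`, see `two_mul_centralBinom_catalan_sum`.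

By Pascal's rule, `2 C(2j+2, j) + 2 C(2j+2, j+1) = C(2j+4, j+2)`. With `m = n + 1`, this expresses
the sum in the theorem through `T (n+1)` and `T (n+2)`, up to the boundary terms of the latter two.
What remains is an identity between binomial coefficients, which follows from Pascal's rule and
`C_N = C(2N, N) - C(2N, N-1)`.
-/

open Finset Nat

theorem two_mul_centralBinom_catalan_sum (n : ℕ) :
    2 * ∑ k ∈ range (n + 1), centralBinom (n - k) * catalan k = centralBinom (n + 1) := by
  have hrefl : ∑ k ∈ range (n + 1), centralBinom (n - k) * catalan k
      = ∑ k ∈ range (n + 1), centralBinom k * catalan (n - k) := by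
    rw [← sum_range_reflect]
    refine sum_congr rfl fun k hk => ?_
    have hk' : k ≤ n := by simpa [Nat.lt_succ_iff] using hk
    rw [show n + 1 - 1 - k = n - k by omega, show n - (n - k) = k by omega]
  rw [two_mul]
  nth_rewrite 2 [hrefl]
  rw [← sum_add_distrib, ← succ_mul_catalan_eq_centralBinom, catalan_succ, mul_sum,
    Fin.sum_univ_eq_sum_range (fun k => (n + 1 + 1) * (catalan k * catalan (n - k))) (n + 1)]
  refine sum_congr rfl fun k hk => ?_
  obtain ⟨j, rfl⟩ := Nat.exists_eq_add_of_le (show k ≤ n by simpa [Nat.lt_succ_iff] using hk)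
  rw [show k + j - k = j by omega, ← succ_mul_catalan_eq_centralBinom,
    ← succ_mul_catalan_eq_centralBinom]
  ring

theorem two_mul_choose_succ (j : ℕ) : 2 * (2 * j + 1).choose j = centralBinom (j + 1) := by
  rw [centralBinom, show 2 * (j + 1) = (2 * j + 1) + 1 by ring, choose_succ_succ' (2 * j + 1) j,
    choose_symm_half, two_mul]

theorem two_mul_choose_add_two (j : ℕ) :
    2 * (2 * j + 2).choose j + 2 * centralBinom (j + 1) = centralBinom (j + 2) := by
  rw [← two_mul_choose_succ (j + 1), show 2 * (j + 1) + 1 = (2 * j + 2) + 1 by ring,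
    choose_succ_succ' (2 * j + 2) j, centralBinom, show 2 * (j + 1) = 2 * j + 2 by ring]
  ring

theorem catalan_add_choose (n : ℕ) :
    catalan (n + 1) + (2 * n + 2).choose n = centralBinom (n + 1) := by
  have h1 := succ_mul_catalan_eq_centralBinom (n + 1)
  have h2 := Nat.choose_succ_right_eq (2 * n + 2) n
  rw [show 2 * n + 2 - n = n + 2 by omega] at h2
  have h3 : (2 * n + 2).choose (n + 1) = centralBinom (n + 1) := by
    rw [centralBinom, show 2 * (n + 1) = 2 * n + 2 by ring]
  rw [h3] at h2
  apply Nat.eq_of_mul_eq_mul_left (show 0 < n + 2 by omega)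
  linear_combination h1 - h2

/-- For `m ≥ 1`, `∑_{k=0}^{m-1} C(2m-2k, m-1-k)·C_k = C(2m+1, m-1)`,
where `C_k` is the `k`-th Catalan number. -/
theorem choose_catalan_convolution (m : ℕ) (hm : 1 ≤ m) :
    ∑ k ∈ Finset.range m, Nat.choose (2 * m - 2 * k) (m - 1 - k) * catalan k
      = Nat.choose (2 * m + 1) (m - 1) := by
  obtain ⟨n, rfl⟩ := Nat.exists_eq_add_of_le' hm
  have hsum : 2 * ∑ k ∈ range (n + 1), (2 * (n + 1) - 2 * k).choose (n + 1 - 1 - k) * catalan k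
      + 2 * ∑ k ∈ range (n + 1), centralBinom (n + 1 - k) * catalan k
      = ∑ k ∈ range (n + 1), centralBinom (n + 2 - k) * catalan k := by
    rw [mul_sum, mul_sum, ← sum_add_distrib]
    refine sum_congr rfl fun k hk => ?_
    obtain ⟨j, rfl⟩ := Nat.exists_eq_add_of_le (show k ≤ n by simpa [Nat.lt_succ_iff] using hk)
    rw [show 2 * (k + j + 1) - 2 * k = 2 * j + 2 by omega, show k + j + 1 - 1 - k = j by omega,
      show k + j + 1 - k = j + 1 by omega, show k + j + 2 - k = j + 2 by omega,
      ← two_mul_choose_add_two]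
    ring
  have hT1 := two_mul_centralBinom_catalan_sum (n + 1)
  have hT2 := two_mul_centralBinom_catalan_sum (n + 2)
  rw [sum_range_succ] at hT1
  rw [sum_range_succ, sum_range_succ] at hT2
  rw [show n + 2 - (n + 1) = 1 by omega] at hT2
  simp only [Nat.sub_self, centralBinom_zero, one_mul, show centralBinom 1 = 2 from rfl] at hT1 hT2
  have hcat := catalan_add_choose (n + 1)
  have hstep := two_mul_choose_add_two (n + 1)
  have hodd := two_mul_choose_succ (n + 1)
  have hpascal := choose_succ_succ' (2 * n + 3) n
  rw [show 2 * (n + 1) + 2 = 2 * n + 3 + 1 by ring] at hcat hstep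
  rw [show 2 * (n + 1) + 1 = 2 * n + 3 by ring] at hodd ⊢
  rw [Nat.add_sub_cancel] at hsum ⊢
  simp only [add_assoc, Nat.reduceAdd] at *
  omega
end

section
/- For integers 1 ≤ k ≤ n, the number of 321-avoiding permutations π of [n] with first entry π₁ = k is C^{(k)}_{n−k}, and the number of 321-avoiding permutations π of [n] with π₁ ≥ k is C^{(k+1)}_{n−k}. -/
/-- The number of occurrences of the pattern 321 in a permutation of `{0,…,n-1}`:
triples of positions `i < j < k` with `π i > π j > π k`. -/
noncomputable def occ321Count (n : ℕ) (π : Equiv.Perm (Fin n)) : ℕ :=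
  Nat.card {t : Fin n × Fin n × Fin n //
    t.1 < t.2.1 ∧ t.2.1 < t.2.2 ∧ π t.2.2 < π t.2.1 ∧ π t.2.1 < π t.1}

namespace Avoid321

/-- `π` has no occurrence of the pattern 321. -/
def Avoids {n : ℕ} (π : Equiv.Perm (Fin n)) : Prop :=
  ∀ i j l, i < j → j < l → π l < π j → ¬ π j < π i

/-- The letters of `π` smaller than `m` appear in increasing order; phrased as: the larger letter of
every inversion is at least `m`. -/
def Inc {n : ℕ} (m : ℕ) (π : Equiv.Perm (Fin n)) : Prop :=
  ∀ i j, i < j → π j < π i → m ≤ (π i : ℕ)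

lemma occ_eq_zero_iff {n : ℕ} (π : Equiv.Perm (Fin n)) : occ321Count n π = 0 ↔ Avoids π := by
  unfold occ321Count Avoids
  rw [Finite.card_eq_zero_iff, isEmpty_subtype]
  constructor
  · intro h i j l hij hjl h1 h2
    exact h (i, j, l) ⟨hij, hjl, h1, h2⟩
  · rintro h ⟨i, j, l⟩ ⟨hij, hjl, h1, h2⟩
    exact h i j l hij hjl h1 h2

/-- The permutation with first letter `k` whose remaining letters are in the same relative order as
those of `σ`. -/
def ins {n : ℕ} (k : Fin (n + 1)) (σ : Equiv.Perm (Fin n)) : Equiv.Perm (Fin (n + 1)) :=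
  (finSuccEquiv' 0).trans ((Equiv.optionCongr σ).trans (finSuccEquiv' k).symm)

@[simp] lemma ins_zero {n : ℕ} (k : Fin (n + 1)) (σ : Equiv.Perm (Fin n)) : ins k σ 0 = k := by
  simp [ins]

@[simp] lemma ins_succ {n : ℕ} (k : Fin (n + 1)) (σ : Equiv.Perm (Fin n)) (i : Fin n) :
    ins k σ i.succ = k.succAbove (σ i) := by
  have : finSuccEquiv' (0 : Fin (n + 1)) i.succ = some i := by
    rw [← Fin.succAbove_zero, finSuccEquiv'_succAbove]
  simp [ins, this]

lemma ins_bijective (n : ℕ) :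
    Function.Bijective (fun p : Fin (n + 1) × Equiv.Perm (Fin n) => ins p.1 p.2) := by
  rw [Fintype.bijective_iff_injective_and_card]
  constructor
  · rintro ⟨k, σ⟩ ⟨k', σ'⟩ h
    have hk : k = k' := by simpa using congrArg (fun π : Equiv.Perm (Fin (n + 1)) => π 0) h
    subst hk
    have : σ = σ' := by
      ext i
      have := congrArg (fun π : Equiv.Perm (Fin (n + 1)) => π i.succ) h
      simp only [ins_succ] at this
      rw [Fin.succAbove_right_injective this]
    rw [this]
  · simp [Fintype.card_perm, Nat.factorial_succ]

/-- Permutations of `{0,…,n}` as pairs of a first letter and the standardization of the rest. -/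
noncomputable def insEquiv (n : ℕ) :
    Fin (n + 1) × Equiv.Perm (Fin n) ≃ Equiv.Perm (Fin (n + 1)) :=
  Equiv.ofBijective _ (ins_bijective n)

lemma card_perm_succ (n : ℕ) (P : Equiv.Perm (Fin (n + 1)) → Prop) :
    Nat.card {π // P π} = ∑ k : Fin (n + 1), Nat.card {σ // P (ins k σ)} := by
  rw [← Nat.card_sigma]
  symm
  refine Nat.card_congr (Equiv.trans ?_ ((insEquiv n).subtypeEquivOfSubtype (p := P)))
  exact
    { toFun := fun x => ⟨(x.1, x.2.1), x.2.2⟩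
      invFun := fun x => ⟨x.1.1, x.1.2, x.2⟩
      left_inv := fun _ => rfl
      right_inv := fun _ => rfl }

/-- An occurrence of 321 in `ins k σ` starting with the first letter `k` is an inversion of `σ`
among the letters smaller than `k`. -/
lemma avoids_ins {n : ℕ} (k : Fin (n + 1)) (σ : Equiv.Perm (Fin n)) :
    Avoids (ins k σ) ↔ Avoids σ ∧ Inc k σ := by
  constructor
  · intro h
    refine ⟨fun i j l hij hjl h1 h2 => ?_, fun i j hij h1 => ?_⟩
    · refine h i.succ j.succ l.succ (by simpa) (by simpa) ?_ ?_ <;> simpa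
    · by_contra hlt
      have h0 := h 0 i.succ j.succ (by simp) (by simpa) (by simpa)
      apply h0
      rw [ins_zero, ins_succ, Fin.succAbove_lt_iff_castSucc_lt]
      simpa [Fin.lt_def] using hlt
  · rintro ⟨ha, hi⟩ i j l hij hjl
    obtain ⟨j, rfl⟩ := Fin.exists_succ_eq.2 (Fin.ne_zero_of_lt hij)
    obtain ⟨l, rfl⟩ := Fin.exists_succ_eq.2 (Fin.ne_zero_of_lt hjl)
    rw [Fin.succ_lt_succ_iff] at hjl
    simp only [ins_succ, Fin.succAbove_lt_succAbove_iff]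
    intro h1
    rcases Fin.eq_zero_or_eq_succ i with rfl | ⟨i, rfl⟩
    · rw [ins_zero, Fin.succAbove_lt_iff_castSucc_lt]
      have := hi j l hjl h1
      simpa [Fin.lt_def] using this
    · rw [Fin.succ_lt_succ_iff] at hij
      simpa using ha i j l hij hjl h1

lemma inc_ins_zero {n : ℕ} (m : ℕ) (σ : Equiv.Perm (Fin n)) :
    Inc (m + 1) (ins 0 σ) ↔ Inc m σ := by
  constructor
  · intro h i j hij h1
    simpa using h i.succ j.succ (by simpa) (by simpa)
  · intro h i j hij
    obtain ⟨j, rfl⟩ := Fin.exists_succ_eq.2 (Fin.ne_zero_of_lt hij)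
    rcases Fin.eq_zero_or_eq_succ i with rfl | ⟨i, rfl⟩
    · simp
    · intro h1
      simpa using h i j (by simpa using hij) (by simpa using h1)

/-- A nonzero first letter `k` is followed by `0`, so the letters `0,…,m` can be in order only
if `m < k`; in that case the condition is already part of the condition for letters below `k`. -/
lemma inc_ins_succ {n : ℕ} (m : ℕ) (k : Fin n) (σ : Equiv.Perm (Fin n))
    (hσ : Inc (k.succ : Fin (n + 1)) σ) : Inc (m + 1) (ins k.succ σ) ↔ m ≤ (k : ℕ) := by
  constructor
  · intro h
    have hn : 0 < n := Nat.lt_of_le_of_lt (Nat.zero_le _) k.2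
    have h0 := h 0 (σ.symm ⟨0, hn⟩).succ (by simp) (by
      rw [ins_zero, ins_succ, Fin.succAbove_lt_iff_castSucc_lt]
      simp [Fin.lt_def])
    simpa using h0
  · intro hm i j hij
    obtain ⟨j, rfl⟩ := Fin.exists_succ_eq.2 (Fin.ne_zero_of_lt hij)
    rcases Fin.eq_zero_or_eq_succ i with rfl | ⟨i, rfl⟩
    · intro _
      simpa using hm
    · intro h1
      have h2 := hσ i j (by simpa using hij) (by simpa using h1)
      rw [ins_succ, Fin.succAbove_of_le_castSucc]
      · simp at h2 ⊢
        omega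
      · simpa [Fin.le_def] using h2

/-- The number of 321-avoiding permutations of `{0,…,n-1}` whose letters smaller than `m` appear in
increasing order. -/
noncomputable def D (n m : ℕ) : ℕ := Nat.card {σ : Equiv.Perm (Fin n) // Avoids σ ∧ Inc m σ}

lemma sum_fin_ite (n m : ℕ) (f : ℕ → ℕ) :
    (∑ k : Fin n, if m ≤ (k : ℕ) then f k else 0) = ∑ k ∈ Finset.Ico m n, f k := by
  rw [Fin.sum_univ_eq_sum_range (fun k => if m ≤ k then f k else 0) n, ← Finset.sum_filter]
  congr 1
  ext k
  simp [and_comm]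

lemma card_ge (n m : ℕ) :
    Nat.card {π : Equiv.Perm (Fin (n + 1)) // Avoids π ∧ m ≤ (π 0 : ℕ)}
      = ∑ k ∈ Finset.Ico m (n + 1), D n k := by
  rw [card_perm_succ, ← sum_fin_ite]
  refine Finset.sum_congr rfl fun k _ => ?_
  by_cases h : m ≤ (k : ℕ) <;> simp [h, avoids_ins, D]

/-- `D n m` counts the avoiders of length `n+1` with first letter `m`. -/
lemma card_eq (n m : ℕ) (hm : m ≤ n) :
    Nat.card {π : Equiv.Perm (Fin (n + 1)) // Avoids π ∧ (π 0 : ℕ) = m} = D n m := by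
  rw [card_perm_succ, Finset.sum_eq_single (⟨m, by omega⟩ : Fin (n + 1))]
  · simp [avoids_ins, D]
  · intro k _ hk
    have : (k : ℕ) ≠ m := fun h => hk (Fin.ext h)
    simp [this]
  · simp

lemma D_succ_zero (n : ℕ) : D (n + 1) 0 = ∑ k ∈ Finset.Ico 0 (n + 1), D n k := by
  rw [← card_ge n 0]
  simp [D, Inc]

lemma D_succ_succ (n m : ℕ) (hm : m ≤ n) :
    D (n + 1) (m + 1) = ∑ k ∈ Finset.Ico m (n + 1), D n k := by
  have hz : Nat.card {σ : Equiv.Perm (Fin n) //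
      Avoids (ins 0 σ) ∧ Inc (m + 1) (ins 0 σ)} = D n m := by
    simp only [avoids_ins, inc_ins_zero, D]
    -- the condition `Inc 0` is vacuous
    simp [Inc]
  have hs (k : Fin n) : Nat.card {σ : Equiv.Perm (Fin n) //
      Avoids (ins k.succ σ) ∧ Inc (m + 1) (ins k.succ σ)}
        = if m ≤ (k : ℕ) then D n (k + 1) else 0 := by
    have (σ : Equiv.Perm (Fin n)) : Avoids (ins k.succ σ) ∧ Inc (m + 1) (ins k.succ σ) ↔
        (Avoids σ ∧ Inc (k + 1) σ) ∧ m ≤ (k : ℕ) := by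
      rw [avoids_ins]
      refine and_congr_right fun h => inc_ins_succ m k σ h.2
    simp only [this]
    by_cases h : m ≤ (k : ℕ) <;> simp [h, D]
  rw [D, card_perm_succ, Fin.sum_univ_succ, hz, Finset.sum_congr rfl fun k _ => hs k,
    sum_fin_ite n m (fun k => D n (k + 1)), Finset.sum_eq_sum_Ico_succ_bot (b := n + 1) (by omega),
    Finset.sum_Ico_add' (fun k => D n k) m n 1]

lemma ballot_zero (k : ℕ) : ballot k 0 = 1 := by simp [ballot]

/-- Pascal's rule for ballot numbers. -/
lemma ballot_pascal (k j : ℕ) :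
    ballot (k + 2) (j + 1) = ballot (k + 3) j + ballot (k + 1) (j + 1) := by
  have e1 : 2 * (j + 1) + (k + 2) - 1 = (2 * j + k + 2) + 1 := by omega
  have e2 : 2 * j + (k + 3) - 1 = 2 * j + k + 2 := by omega
  have e3 : 2 * (j + 1) + (k + 1) - 1 = 2 * j + k + 2 := by omega
  have h1 := Nat.choose_le_succ_of_lt_half_left (r := j) (n := 2 * j + k + 2) (by omega)
  unfold ballot
  rw [e1, e2, e3]
  cases j with
  | zero => simp; omega
  | succ i =>
    have h2 := Nat.choose_le_succ_of_lt_half_left (r := i) (n := 2 * (i + 1) + k + 2) (by omega)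
    simp only [Nat.add_eq_zero_iff, one_ne_zero, and_false, if_false, Nat.add_sub_cancel]
    rw [Nat.choose_succ_succ' (2 * (i + 1) + k + 2) (i + 1), Nat.choose_succ_succ' (2 * (i + 1) + k + 2) i]
    omega

lemma ballot_one_succ (n : ℕ) : ballot 1 (n + 1) = ballot 2 n := by
  have e1 : 2 * (n + 1) + 1 - 1 = (2 * n + 1) + 1 := by omega
  have e2 : 2 * n + 2 - 1 = 2 * n + 1 := by omega
  have h1 := Nat.choose_symm_half n
  unfold ballot
  rw [e1, e2]
  cases n with
  | zero => simp
  | succ i =>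
    simp only [Nat.add_eq_zero_iff, one_ne_zero, and_false, if_false, Nat.add_sub_cancel]
    rw [Nat.choose_succ_succ' (2 * (i + 1) + 1) (i + 1), Nat.choose_succ_succ' (2 * (i + 1) + 1) i]
    omega

lemma sum_range_ballot (j k : ℕ) :
    ∑ i ∈ Finset.range (j + 1), ballot (k + i + 1) (j - i) = ballot (k + 2) j := by
  induction j generalizing k with
  | zero => simp [ballot_zero]
  | succ j ih =>
    rw [Finset.sum_range_succ', ballot_pascal, ← ih (k + 1)]
    congr 1
    refine Finset.sum_congr rfl fun i _ => ?_
    congr 1 <;> omega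

lemma sum_ballot (n m : ℕ) (hm : m ≤ n) :
    ∑ k ∈ Finset.Ico m (n + 1), ballot (k + 1) (n - k) = ballot (m + 2) (n - m) := by
  rw [Finset.sum_Ico_eq_sum_range, ← sum_range_ballot, show n + 1 - m = n - m + 1 by omega]
  refine Finset.sum_congr rfl fun i _ => ?_
  congr 1
  omega

lemma D_eq (n m : ℕ) (hm : m ≤ n) : D n m = ballot (m + 1) (n - m) := by
  induction n generalizing m with
  | zero =>
    obtain rfl : m = 0 := by omega
    simp [D, Avoids, Inc, ballot_zero]
  | succ n ih =>
    have hsum (l : ℕ) (hl : l ≤ n) :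
        ∑ k ∈ Finset.Ico l (n + 1), D n k = ballot (l + 2) (n - l) := by
      rw [← sum_ballot n l hl]
      refine Finset.sum_congr rfl fun k hk => ih k ?_
      have := (Finset.mem_Ico.1 hk).2
      omega
    cases m with
    | zero => rw [D_succ_zero, hsum 0 (by omega)]; exact (ballot_one_succ n).symm
    | succ m => rw [D_succ_succ n m (by omega), hsum m (by omega), Nat.add_sub_add_right]

end Avoid321

open Avoid321 in
/-- For `1 ≤ k ≤ n`, the number of 321-avoiding permutations of `[n]` whose first
entry equals `k` is `C^{(k)}_{n-k}`, and the number whose first entry is `≥ k` is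
`C^{(k+1)}_{n-k}`.  (A permutation of `[n]` is modelled as `π : Equiv.Perm (Fin n)`,
the letter in position `i+1` being `(π i : ℕ) + 1`.) -/
theorem avoid321_first_entry_count (n k : ℕ) (hk : 1 ≤ k) (hkn : k ≤ n) :
    Nat.card {π : Equiv.Perm (Fin n) //
        occ321Count n π = 0 ∧ ((π ⟨0, by omega⟩ : Fin n) : ℕ) + 1 = k}
      = ballot k (n - k) ∧
    Nat.card {π : Equiv.Perm (Fin n) //
        occ321Count n π = 0 ∧ k ≤ ((π ⟨0, by omega⟩ : Fin n) : ℕ) + 1}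
      = ballot (k + 1) (n - k) := by
  obtain ⟨n, rfl⟩ : ∃ n', n = n' + 1 := ⟨n - 1, by omega⟩
  obtain ⟨k, rfl⟩ : ∃ k', k = k' + 1 := ⟨k - 1, by omega⟩
  have hkn' : k ≤ n := by omega
  simp only [occ_eq_zero_iff, add_left_inj, add_le_add_iff_right, Nat.add_sub_add_right]
  refine ⟨(card_eq n k hkn').trans (D_eq n k hkn'), (card_ge n k).trans ?_⟩
  rw [← sum_ballot n k hkn']
  refine Finset.sum_congr rfl fun i hi => D_eq n i ?_
  have := (Finset.mem_Ico.1 hi).2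
  omega
end

section
/- Let π be a permutation of [n] containing exactly one occurrence of the pattern 132, say at positions i<j<k with values a = π_i, c = π_j, b = π_k (so a < b < c). Then j = i+1 (a and c are adjacent in position) and b = a+1 (a and b are consecutive in value). -/
/-!
Any entry separating `a` from `c` in position, or `a` from `b` in value, yields a second
occurrence of 132. Let `x` sit at a position strictly between those of `a` and `c`: if `x > b`
then `a x b` is an occurrence, and if `x < b` then `x c b` is one. Let `v` be a value strictly
between `a` and `b`: if `v` stands to the left of `c` then `v c b` is an occurrence, and if it
stands to the right then `a c v` is one.
-/

/-- The number of occurrences of the pattern 132 in a permutation of `{0,…,n-1}`: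
triples of positions `i < j < k` with `π i < π k < π j`. -/
noncomputable def occ132Count (n : ℕ) (π : Equiv.Perm (Fin n)) : ℕ :=
  Nat.card {t : Fin n × Fin n × Fin n //
    t.1 < t.2.1 ∧ t.2.1 < t.2.2 ∧ π t.1 < π t.2.2 ∧ π t.2.2 < π t.2.1}

/-- If a permutation of `[n]` contains exactly one occurrence of the pattern 132, at
positions `i < j < k` with values `a = π i`, `c = π j`, `b = π k` (`a < b < c`), then
`j = i + 1` (`a` and `c` are adjacent in position) and `b = a + 1` (`a` and `b` are
consecutive in value). -/
theorem one132_adjacent (n : ℕ) (π : Equiv.Perm (Fin n)) (i j k : Fin n)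
    (huniq : occ132Count n π = 1)
    (hocc : i < j ∧ j < k ∧ π i < π k ∧ π k < π j) :
    (j : ℕ) = (i : ℕ) + 1 ∧ ((π k : Fin n) : ℕ) = ((π i : Fin n) : ℕ) + 1 := by
  have key : ∀ p q r : Fin n, p < q → q < r → π p < π r → π r < π q →
      p = i ∧ q = j ∧ r = k := by
    intro p q r h1 h2 h3 h4
    have hs := (Nat.card_eq_one_iff_unique.mp huniq).1
    have := congrArg Subtype.val
      (hs.elim ⟨(p, q, r), h1, h2, h3, h4⟩ ⟨(i, j, k), hocc⟩)
    simpa using this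
  obtain ⟨hij, hjk, hab, hbc⟩ := hocc
  constructor
  · by_contra hne
    obtain ⟨m, him, hmj⟩ : ∃ m : Fin n, i < m ∧ m < j :=
      ⟨⟨i + 1, by omega⟩, by simp [Fin.lt_def], by rw [Fin.lt_def] at *; simp only; omega⟩
    rcases lt_trichotomy (π m) (π k) with h | h | h
    · exact him.ne' (key m j k hmj hjk h hbc).1
    · exact (hmj.trans hjk).ne (π.injective h)
    · exact hmj.ne (key i m k him (hmj.trans hjk) hab h).2.1
  · by_contra hne
    obtain ⟨v, hav, hvb⟩ : ∃ v : Fin n, π i < v ∧ v < π k :=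
      ⟨⟨π i + 1, by omega⟩, by simp [Fin.lt_def], by rw [Fin.lt_def] at *; simp only; omega⟩
    obtain ⟨m, rfl⟩ := π.surjective v
    rcases lt_trichotomy m j with h | rfl | h
    · obtain rfl := (key m j k h hjk hvb hbc).1
      exact lt_irrefl _ hav
    · exact lt_asymm hvb hbc
    · obtain rfl := (key i j m hij h hav (hvb.trans hbc)).2.2
      exact lt_irrefl _ hvb
end

section
/- For n ≥ 3, the number of permutations of [n] containing exactly one occurrence of the pattern 132 for which the three positions of that occurrence are consecutive (positions t, t+1, t+2 for some t) is (n−2)·C_{n−2} = C(2n−4, n−3). -/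
open Finset.HasAntidiagonal (antidiagonal)

namespace One132

/-! ### Occurrences of 132 in words -/

/-- The values `x, y, z` form an occurrence of the pattern 132 in the word `l`: they appear in `l`
in this order and `x < z < y`. In a word without repeated letters such triples of values correspond
to triples of positions. -/
def Occ (l : List ℕ) (x y z : ℕ) : Prop := [x, y, z].Sublist l ∧ x < z ∧ z < y

/-- The word `l` avoids the pattern 132. -/
def Avoids (l : List ℕ) : Prop := ∀ x y z, ¬ Occ l x y z

/-- The word `l`, if it has no repeated letters, contains exactly one occurrence of 132, and its
three letters are adjacent in `l`. -/
def OneConsec (l : List ℕ) : Prop :=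
  ∃ x y z, Occ l x y z ∧ [x, y, z] <:+: l ∧
    ∀ x' y' z', Occ l x' y' z' → x' = x ∧ y' = y ∧ z' = z

lemma three_sublist_append (A B : List ℕ) (x y z : ℕ) :
    [x, y, z].Sublist (A ++ B) ↔ [x, y, z].Sublist A ∨ ([x, y].Sublist A ∧ z ∈ B) ∨
      (x ∈ A ∧ [y, z].Sublist B) ∨ [x, y, z].Sublist B := by
  rw [List.sublist_append_iff]
  constructor
  · rintro ⟨l₁, l₂, h, h₁, h₂⟩
    rcases l₁ with _ | ⟨a, _ | ⟨b, _ | ⟨c, l₁⟩⟩⟩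
    · simp at h; subst h; simp [h₂]
    · simp at h; obtain ⟨rfl, rfl⟩ := h; simp_all
    · simp at h; obtain ⟨rfl, rfl, rfl⟩ := h; simp_all
    · simp at h; obtain ⟨rfl, rfl, rfl, rfl, rfl⟩ := h; simp_all
  · rintro (h | ⟨h, h'⟩ | ⟨h, h'⟩ | h)
    · exact ⟨_, [], by simp, h, by simp⟩
    · exact ⟨[x, y], [z], by simp, h, by simpa⟩
    · exact ⟨[x], [y, z], by simp, by simpa, h'⟩
    · exact ⟨[], _, by simp, by simp, h⟩

lemma Occ.mem {l : List ℕ} {x y z : ℕ} (h : Occ l x y z) : x ∈ l ∧ y ∈ l ∧ z ∈ l :=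
  ⟨h.1.subset (by simp), h.1.subset (by simp), h.1.subset (by simp)⟩

lemma Occ.left {L : List ℕ} {x y z : ℕ} (h : Occ L x y z) (R : List ℕ) : Occ (L ++ R) x y z :=
  ⟨h.1.trans (List.sublist_append_left _ _), h.2⟩

lemma Occ.right {R : List ℕ} {x y z : ℕ} (h : Occ R x y z) (L : List ℕ) : Occ (L ++ R) x y z :=
  ⟨h.1.trans (List.sublist_append_right _ _), h.2⟩

lemma Occ.right' {R : List ℕ} {x y z N : ℕ} (h : Occ R x y z) (L : List ℕ) :
    Occ (L ++ N :: R) x y z :=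
  ⟨h.1.trans ((List.sublist_cons_self _ _).trans (List.sublist_append_right _ _)), h.2⟩

lemma occ_max {L R : List ℕ} {N x z : ℕ} (hR : ∀ v ∈ R, v < N) (hx : x ∈ L) (hz : z ∈ R)
    (h : x < z) : Occ (L ++ N :: R) x N z := by
  refine ⟨?_, h, hR z hz⟩
  rw [three_sublist_append]
  right; right; left
  exact ⟨hx, by simpa [List.cons_sublist_cons']⟩

/-- An occurrence of 132 in a word `L N R` with largest letter `N` lies within `L`, or within `R`,
or it makes some letter of `L` smaller than some letter of `R`; in the last case the middle letter
may be `N`, and otherwise comes from `L` or `R`. -/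
lemma occ_mid {L R : List ℕ} {N x y z : ℕ} (hL : ∀ v ∈ L, v < N) (hR : ∀ v ∈ R, v < N)
    (h : Occ (L ++ N :: R) x y z) :
    Occ L x y z ∨ Occ R x y z ∨ (y = N ∧ x ∈ L ∧ z ∈ R ∧ x < z) ∨
      (([x, y].Sublist L ∨ [y, z].Sublist R) ∧ x ∈ L ∧ z ∈ R ∧ x < z) := by
  obtain ⟨h, h1, h2⟩ := h
  have key : ∀ v, v ∈ L ++ N :: R → v ≤ N := by
    intro v hv
    simp at hv
    rcases hv with hv | rfl | hv
    · exact (hL v hv).le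
    · exact le_rfl
    · exact (hR v hv).le
  have hyN := key y (h.subset (by simp))
  rw [three_sublist_append] at h
  rcases h with h | ⟨h, h'⟩ | ⟨h, h'⟩ | h
  · exact Or.inl ⟨h, h1, h2⟩
  · have hx : x ∈ L := h.subset (by simp)
    have hy : y ∈ L := h.subset (by simp)
    simp at h'
    rcases h' with rfl | h'
    · omega
    · simp [*]
  · rw [List.cons_sublist_cons'] at h'
    rcases h' with h' | ⟨rfl, h'⟩
    · have hx : y ∈ R := h'.subset (by simp)
      have hy : z ∈ R := h'.subset (by simp)
      simp [*]
    · simp at h'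
      simp [*]
  · rw [List.cons_sublist_cons'] at h
    rcases h with h | ⟨rfl, h⟩
    · exact Or.inr (Or.inl ⟨h, h1, h2⟩)
    · omega

lemma avoids_mid {L R : List ℕ} {N : ℕ} (hnd : (L ++ N :: R).Nodup)
    (hL : ∀ v ∈ L, v < N) (hR : ∀ v ∈ R, v < N) :
    Avoids (L ++ N :: R) ↔ (∀ x ∈ L, ∀ z ∈ R, z < x) ∧ Avoids L ∧ Avoids R := by
  constructor
  · intro h
    refine ⟨fun x hx z hz => ?_, fun x y z h' => h _ _ _ (h'.left _),
      fun x y z h' => h _ _ _ (h'.right' _)⟩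
    by_contra hc
    have hne : x ≠ z := by
      rintro rfl
      exact (List.disjoint_of_nodup_append hnd) hx (by simp [hz])
    exact h _ _ _ (occ_max hR hx hz (by omega))
  · rintro ⟨hs, h1, h2⟩ x y z h
    rcases occ_mid hL hR h with h | h | ⟨-, h, h', h''⟩ | ⟨-, h, h', h''⟩
    · exact h1 _ _ _ h
    · exact h2 _ _ _ h
    · have := hs _ h _ h'; omega
    · have := hs _ h _ h'; omega

lemma mid_inj {L R A B : List ℕ} {N : ℕ} (hL : N ∉ L) (hR : N ∉ R)
    (h : L ++ N :: R = A ++ N :: B) : L = A ∧ R = B := by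
  rw [List.append_cons_inj_of_notMem hL hR] at h
  exact ⟨h.1, h.2.2⟩

/-- An infix of `L N R` that does not contain the letter `N` is an infix of `L` or of `R`. -/
lemma infix_mid {L R w : List ℕ} {N : ℕ} (hL : N ∉ L) (hR : N ∉ R) (hw : N ∉ w)
    (h : w <:+: L ++ N :: R) : w <:+: L ∨ w <:+: R := by
  obtain ⟨s, t, h⟩ := h
  have hN : N ∈ s ++ w ++ t := by rw [h]; simp
  simp [hw] at hN
  rcases hN with hN | hN
  · obtain ⟨s₁, s₂, rfl⟩ := List.append_of_mem hN
    have h' : L ++ N :: R = s₁ ++ N :: (s₂ ++ w ++ t) := by rw [← h]; simp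
    exact Or.inr ⟨s₂, t, (mid_inj hL hR h').2.symm⟩
  · obtain ⟨s₁, s₂, rfl⟩ := List.append_of_mem hN
    have h' : L ++ N :: R = (s ++ w ++ s₁) ++ N :: s₂ := by rw [← h]; simp
    exact Or.inl ⟨s, s₁, (mid_inj hL hR h').1.symm⟩

/-- The words `L = L' x` and `R = z R'` for which the single occurrence of 132 in `L N R`, where
`N` is the largest letter, is `x N z`. -/
def Straddle (L R : List ℕ) : Prop :=
  ∃ L' x z R', L = L' ++ [x] ∧ R = z :: R' ∧ x < z ∧ (∀ u ∈ L', z < u) ∧ (∀ v ∈ R', v < x) ∧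
    Avoids L' ∧ Avoids R'

lemma Avoids.of_append_left {L R : List ℕ} (h : Avoids (L ++ R)) : Avoids L :=
  fun _ _ _ h' => h _ _ _ (h'.left _)

lemma Avoids.of_append_right {L R : List ℕ} (h : Avoids (L ++ R)) : Avoids R :=
  fun _ _ _ h' => h _ _ _ (h'.right _)

lemma avoids_concat_min {L : List ℕ} {x : ℕ} (h : Avoids L) (hx : ∀ u ∈ L, x < u) :
    Avoids (L ++ [x]) := by
  rintro a b c ⟨h1, h2, h3⟩
  rw [three_sublist_append] at h1
  rcases h1 with h1 | ⟨h1, h'⟩ | ⟨h1, h'⟩ | h1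
  · exact h _ _ _ ⟨h1, h2, h3⟩
  · have := hx a (h1.subset (by simp))
    simp at h'
    omega
  · simpa using h'.length_le
  · simpa using h1.length_le

lemma avoids_cons_max {R : List ℕ} {z : ℕ} (h : Avoids R) (hz : ∀ v ∈ R, v < z) :
    Avoids (z :: R) := by
  rintro a b c ⟨h1, h2, h3⟩
  rw [List.cons_sublist_cons'] at h1
  rcases h1 with h1 | ⟨rfl, h1⟩
  · exact h _ _ _ ⟨h1, h2, h3⟩
  · have := hz c (h1.subset (by simp))
    omega

/-- A word with largest letter `N` and a single occurrence of 132, on adjacent letters: either the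
occurrence avoids `N`, and then every letter before `N` exceeds every letter after it, or its middle
letter is `N`. -/
lemma oneConsec_mid {L R : List ℕ} {N : ℕ} (hnd : (L ++ N :: R).Nodup)
    (hL : ∀ v ∈ L, v < N) (hR : ∀ v ∈ R, v < N) :
    OneConsec (L ++ N :: R) ↔
      ((∀ x ∈ L, ∀ z ∈ R, z < x) ∧ OneConsec L ∧ Avoids R) ∨
      ((∀ x ∈ L, ∀ z ∈ R, z < x) ∧ Avoids L ∧ OneConsec R) ∨ Straddle L R := by
  have hNL : N ∉ L := fun h => (hL _ h).false
  have hNR : N ∉ R := fun h => (hR _ h).false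
  have hdis : ∀ a, a ∈ L → a ∈ R → False := fun a h h' =>
    (List.disjoint_of_nodup_append hnd) h (by simp [h'])
  constructor
  · rintro ⟨x, y, z, hocc, hinf, huniq⟩
    by_cases hs : ∀ x ∈ L, ∀ z ∈ R, z < x
    · have hN : N ∉ [x, y, z] := by
        intro hN
        rcases occ_mid hL hR hocc with h | h | ⟨-, h, h', h''⟩ | ⟨-, h, h', h''⟩
        · have := h.mem
          simp at hN
          rcases hN with rfl | rfl | rfl <;> tauto
        · have := h.mem
          simp at hN
          rcases hN with rfl | rfl | rfl <;> tauto
        · have := hs _ h _ h'; omega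
        · have := hs _ h _ h'; omega
      rcases infix_mid hNL hNR hN hinf with h | h
      · refine Or.inl ⟨hs, ⟨x, y, z, ⟨h.sublist, hocc.2⟩, h, fun _ _ _ h' => huniq _ _ _ (h'.left _)⟩,
          fun x' y' z' h' => ?_⟩
        have := (huniq _ _ _ (h'.right' _)).1
        exact hdis x (h.subset (by simp)) (this ▸ h'.mem.1)
      · refine Or.inr (Or.inl ⟨hs, fun x' y' z' h' => ?_,
          ⟨x, y, z, ⟨h.sublist, hocc.2⟩, h, fun _ _ _ h' => huniq _ _ _ (h'.right' _)⟩⟩)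
        have := (huniq _ _ _ (h'.left _)).1
        exact hdis x (this ▸ h'.mem.1) (h.subset (by simp))
    · push Not at hs
      obtain ⟨u, hu, v, hv, huv⟩ := hs
      have huv' : u < v := lt_of_le_of_ne huv (by rintro rfl; exact hdis _ hu hv)
      obtain ⟨rfl, rfl, rfl⟩ := huniq _ _ _ (occ_max hR hu hv huv')
      have hAL : Avoids L := fun _ _ _ h' =>
        hNL ((huniq _ _ _ (h'.left _)).2.1 ▸ h'.mem.2.1)
      have hAR : Avoids R := fun _ _ _ h' =>
        hNR ((huniq _ _ _ (h'.right' _)).2.1 ▸ h'.mem.2.1)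
      obtain ⟨s, t, hst⟩ := hinf
      obtain ⟨rfl, rfl⟩ := mid_inj (A := s ++ [u]) (B := v :: t) hNL hNR (by rw [← hst]; simp)
      refine Or.inr (Or.inr ⟨s, u, v, t, rfl, rfl, huv', fun w hw => ?_, fun w hw => ?_,
        hAL.of_append_left, hAR.of_append_right (L := [v])⟩)
      · by_contra hc
        have hwv : w ≠ v := fun h => hdis w (by simp [hw]) (by simp [h])
        have h1 := (huniq _ _ _ (occ_max (x := w) (z := v) hR (by simp [hw]) (by simp)
          (by omega))).1
        subst h1
        have := hnd.of_append_left
        simp [List.nodup_append] at this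
        exact this.2 _ hw rfl
      · by_contra hc
        have hwv : w ≠ u := fun h => hdis u (by simp) (by simp [← h, hw])
        have h1 := (huniq _ _ _ (occ_max (x := u) (z := w) hR (by simp) (by simp [hw])
          (by omega))).2.2
        subst h1
        have := hnd.of_append_right
        simp [hw] at this
  · rintro (⟨hs, ⟨x, y, z, hocc, hinf, huniq⟩, hA⟩ | ⟨hs, hA, ⟨x, y, z, hocc, hinf, huniq⟩⟩ |
      ⟨L', x, z, R', rfl, rfl, hxz, hL', hR', hAL, hAR⟩)
    · refine ⟨x, y, z, hocc.left _, hinf.trans (List.infix_append' [] _ _), fun x' y' z' h' => ?_⟩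
      rcases occ_mid hL hR h' with h | h | ⟨-, h, h', h''⟩ | ⟨-, h, h', h''⟩
      · exact huniq _ _ _ h
      · exact (hA _ _ _ h).elim
      · have := hs _ h _ h'; omega
      · have := hs _ h _ h'; omega
    · refine ⟨x, y, z, hocc.right' _, hinf.trans ⟨L ++ [N], [], by simp⟩, fun x' y' z' h' => ?_⟩
      rcases occ_mid hL hR h' with h | h | ⟨-, h, h', h''⟩ | ⟨-, h, h', h''⟩
      · exact (hA _ _ _ h).elim
      · exact huniq _ _ _ h
      · have := hs _ h _ h'; omega
      · have := hs _ h _ h'; omega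
    · have key : ∀ a ∈ L' ++ [x], ∀ c ∈ z :: R', a < c → a = x ∧ c = z := by
        intro a ha c hc hac
        simp at ha hc
        rcases ha with ha | rfl <;> rcases hc with rfl | hc
        · have := hL' _ ha; omega
        · have := hL' _ ha; have := hR' _ hc; omega
        · simp
        · have := hR' _ hc; omega
      refine ⟨x, N, z, occ_max hR (by simp) (by simp) hxz, ⟨L', R', by simp⟩,
        fun x' y' z' h' => ?_⟩
      rcases occ_mid hL hR h' with h | h | ⟨h0, h, h', h''⟩ | ⟨h0, h, h', h''⟩
      · exact (avoids_concat_min hAL (fun u hu => hxz.trans (hL' u hu)) _ _ _ h).elim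
      · exact (avoids_cons_max hAR (fun u hu => (hR' u hu).trans hxz) _ _ _ h).elim
      · exact ⟨(key _ h _ h' h'').1, h0, (key _ h _ h' h'').2⟩
      · -- the middle letter cannot come from `L` or `R`: one of the outer letters would repeat
        exfalso
        obtain ⟨rfl, rfl⟩ := key _ h _ h' h''
        rcases h0 with h0 | h0
        · have h1 : x' ∈ L' := by
            have h2 := h0.reverse
            simp only [List.reverse_append, List.reverse_cons, List.reverse_nil, List.nil_append,
              List.singleton_append, List.cons_sublist_cons'] at h2
            rcases h2 with h2 | ⟨-, h2⟩
            · simpa using h2.subset (a := x') (by simp)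
            · simpa using h2
          have := hL' _ h1
          omega
        · have h1 : z' ∈ R' := by
            rw [List.cons_sublist_cons'] at h0
            rcases h0 with h0 | ⟨-, h0⟩
            · exact h0.subset (by simp)
            · simpa using h0
          have := hR' _ h1
          omega

/-! ### Counting words by the position of the largest letter -/

/-- The words that list the `k` letters `a, a + 1, …, a + k - 1` in some order. -/
def words (a k : ℕ) : Finset (List ℕ) := (List.range' a k).permutations.toFinset

lemma mem_words {a k : ℕ} {l : List ℕ} : l ∈ words a k ↔ l.Perm (List.range' a k) := by
  simp [words, List.mem_permutations]

lemma words_nodup {a k : ℕ} {l : List ℕ} (h : l ∈ words a k) : l.Nodup :=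
  (mem_words.1 h).nodup_iff.2 List.nodup_range'

lemma words_length {a k : ℕ} {l : List ℕ} (h : l ∈ words a k) : l.length = k := by
  simpa using (mem_words.1 h).length_eq

lemma words_mem {a k : ℕ} {l : List ℕ} (h : l ∈ words a k) (x : ℕ) :
    x ∈ l ↔ a ≤ x ∧ x < a + k := by
  rw [(mem_words.1 h).mem_iff, List.mem_range'_1]

/-- If the letters of `R L` form an interval and those of `R` are below those of `L`, then the
letters of `R` and of `L` form consecutive intervals: `R` and `L`, each sorted and then concatenated,
give the increasing word on the whole interval. -/
lemma append_mem_words {a k : ℕ} {R L : List ℕ} (hRL : ∀ x ∈ R, ∀ y ∈ L, x < y)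
    (h : R ++ L ∈ words a k) :
    R ∈ words a R.length ∧ L ∈ words (a + R.length) L.length := by
  have hk := words_length h
  rw [mem_words] at h
  have hR := List.perm_insertionSort (· ≤ ·) R
  have hL := List.perm_insertionSort (· ≤ ·) L
  have hs : (R.insertionSort (· ≤ ·) ++ L.insertionSort (· ≤ ·)).Pairwise (· ≤ ·) := by
    rw [List.pairwise_append]
    refine ⟨List.pairwise_insertionSort _ _, List.pairwise_insertionSort _ _, ?_⟩
    intro x hx y hy
    exact (hRL x (hR.mem_iff.1 hx) y (hL.mem_iff.1 hy)).le
  have e := List.Perm.eq_of_pairwise (fun a b _ _ h h' => le_antisymm h h') hs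
    (List.pairwise_le_range' (s := a) (n := k) 1) ((hR.append hL).trans h)
  have e2 : List.range' a k = List.range' a R.length ++ List.range' (a + R.length) L.length := by
    rw [← hk, List.length_append]
    simp
  rw [e2] at e
  obtain ⟨e3, e4⟩ := List.append_inj e (by simp)
  rw [mem_words, mem_words, ← e3, ← e4]
  exact ⟨hR.symm, hL.symm⟩

lemma append_mem_words' {a i j : ℕ} {R L : List ℕ} (hR : R ∈ words a j)
    (hL : L ∈ words (a + j) i) : R ++ L ∈ words a (j + i) := by
  rw [mem_words] at *
  have := List.range'_append (s := a) (m := j) (n := i) (step := 1)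
  rw [one_mul] at this
  rw [← this]
  exact hR.append hL

lemma mid_mem_words {a k : ℕ} {L R : List ℕ} :
    L ++ (a + k) :: R ∈ words a (k + 1) ↔ R ++ L ∈ words a k := by
  rw [mem_words, mem_words, List.range'_concat, one_mul]
  have h1 : (L ++ (a + k) :: R).Perm ((a + k) :: (R ++ L)) :=
    List.perm_middle.trans (List.perm_append_comm.cons _)
  have h2 : (List.range' a k ++ [a + k]).Perm ((a + k) :: List.range' a k) :=
    List.perm_append_comm
  rw [h1.congr_left, h2.congr_right, List.perm_cons]

open Classical in
/-- The number of words on `a, …, a + k - 1` with the property `P`. -/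
noncomputable def count (P : List ℕ → Prop) (a k : ℕ) : ℕ := ((words a k).filter P).card

/-- The word `l` is `L N R` with `N` its largest letter and `Q L R`. -/
def Split (Q : List ℕ → List ℕ → Prop) (l : List ℕ) : Prop :=
  ∃ L N R, l = L ++ N :: R ∧ (∀ v ∈ L, v < N) ∧ (∀ v ∈ R, v < N) ∧ Q L R

/-- For the words on `a, …, a + k` the letter at which `Split` cuts is `a + k`. -/
lemma split_words {a k : ℕ} {l : List ℕ} (hl : l ∈ words a (k + 1)) :
    ∃ L R, l = L ++ (a + k) :: R ∧ (∀ v ∈ L, v < a + k) ∧ (∀ v ∈ R, v < a + k) ∧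
      ∀ Q, Split Q l ↔ Q L R := by
  have hm : a + k ∈ l := (words_mem hl _).2 (by omega)
  have hnd := words_nodup hl
  obtain ⟨L, R, rfl⟩ := List.append_of_mem hm
  have hw := mid_mem_words.1 hl
  have hL : ∀ v ∈ L, v < a + k := fun v hv => ((words_mem hw v).1 (by simp [hv])).2
  have hR : ∀ v ∈ R, v < a + k := fun v hv => ((words_mem hw v).1 (by simp [hv])).2
  refine ⟨L, R, rfl, hL, hR, fun Q => ⟨?_, fun h => ⟨L, _, R, rfl, hL, hR, h⟩⟩⟩
  rintro ⟨L', N, R', h, hL', hR', hQ⟩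
  have h1 : N ≤ a + k := by
    have : N ∈ L ++ (a + k) :: R := by rw [h]; simp
    simp at this
    rcases this with h | h | h
    · exact (hL _ h).le
    · exact h.le
    · exact (hR _ h).le
  have h2 : a + k ≤ N := by
    rw [h] at hm
    simp at hm
    rcases hm with h | h | h
    · exact (hL' _ h).le
    · exact h.le
    · exact (hR' _ h).le
  obtain rfl : N = a + k := le_antisymm h1 h2
  obtain ⟨rfl, rfl⟩ := mid_inj (fun h => (hL _ h).false) (fun h => (hR _ h).false) h
  exact hQ

lemma count_congr {P Q : List ℕ → Prop} {a k : ℕ} (h : ∀ l ∈ words a k, (P l ↔ Q l)) :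
    count P a k = count Q a k := by
  classical
  unfold count
  congr 1
  exact Finset.filter_congr h

lemma count_or {P Q : List ℕ → Prop} {a k : ℕ} (h : ∀ l ∈ words a k, P l → ¬ Q l) :
    count (fun l => P l ∨ Q l) a k = count P a k + count Q a k := by
  classical
  unfold count
  rw [← Finset.card_union_of_disjoint (Finset.disjoint_filter.2 h)]
  congr 1
  ext l
  simp only [Finset.mem_filter, Finset.mem_union]
  tauto

/-- Words with the property `S` are counted by assembling them, injectively, from pairs `(L, R)`
with `P L` and `Q R`, of total length `m`. The word `R` uses the letters from `a` on, `L` those after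
the letters of `R` and a gap of `d` letters. -/
lemma count_eq_sum {P Q S : List ℕ → Prop} {a k m d : ℕ} (f : ℕ × List ℕ × List ℕ → List ℕ)
    (hf : ∀ i j L R, i + j = m → L ∈ words (a + j + d) i → R ∈ words a j → P L → Q R →
      f (j, L, R) ∈ words a k ∧ S (f (j, L, R)))
    (hinj : ∀ i j L R i' j' L' R', i + j = m → L ∈ words (a + j + d) i → R ∈ words a j →
      i' + j' = m → L' ∈ words (a + j' + d) i' → R' ∈ words a j' →
      f (j, L, R) = f (j', L', R') → L = L' ∧ R = R')
    (hsurj : ∀ l ∈ words a k, S l → ∃ i j L R, i + j = m ∧ L ∈ words (a + j + d) i ∧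
      R ∈ words a j ∧ P L ∧ Q R ∧ f (j, L, R) = l) :
    count S a k = ∑ ij ∈ antidiagonal m, count P (a + ij.2 + d) ij.1 * count Q a ij.2 := by
  classical
  unfold count
  simp_rw [← Finset.card_product]
  rw [← Finset.card_sigma]
  symm
  refine Finset.card_nbij (fun p => f (p.1.2, p.2.1, p.2.2)) ?_ ?_ ?_
  · rintro ⟨⟨i, j⟩, L, R⟩ h
    simp at h
    obtain ⟨h0, ⟨h1, h2⟩, h3, h4⟩ := h
    simpa using hf i j L R h0 h1 h3 h2 h4
  · rintro ⟨⟨i, j⟩, L, R⟩ h ⟨⟨i', j'⟩, L', R'⟩ h' he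
    simp at h h'
    obtain ⟨h0, ⟨h1, h2⟩, h3, h4⟩ := h
    obtain ⟨h0', ⟨h1', h2'⟩, h3', h4'⟩ := h'
    obtain ⟨rfl, rfl⟩ := hinj i j L R i' j' L' R' h0 h1 h3 h0' h1' h3' he
    obtain rfl := (words_length h1).symm.trans (words_length h1')
    obtain rfl := (words_length h3).symm.trans (words_length h3')
    rfl
  · intro l hl
    simp at hl
    obtain ⟨i, j, L, R, h0, h1, h2, h3, h4, h5⟩ := hsurj l hl.1 hl.2
    exact ⟨⟨(i, j), L, R⟩, by simp [*], h5⟩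

lemma count_sep (P Q : List ℕ → Prop) (a k : ℕ) :
    count (Split fun L R => (∀ x ∈ L, ∀ z ∈ R, z < x) ∧ P L ∧ Q R) a (k + 1) =
      ∑ ij ∈ antidiagonal k, count P (a + ij.2) ij.1 * count Q a ij.2 := by
  refine count_eq_sum (d := 0) (fun p => p.2.1 ++ (a + k) :: p.2.2) ?_ ?_ ?_
  · intro i j L R hij hL hR hPL hQR
    refine ⟨?_, L, a + k, R, rfl, fun v hv => ?_, fun v hv => ?_, fun x hx z hz => ?_, hPL, hQR⟩
    · rw [mid_mem_words, ← hij, add_comm i]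
      exact append_mem_words' hR hL
    · have := (words_mem hL v).1 hv; omega
    · have := (words_mem hR v).1 hv; omega
    · have := (words_mem hL x).1 hx; have := (words_mem hR z).1 hz; omega
  · intro i j L R i' j' L' R' hij hL hR hij' hL' hR' he
    refine mid_inj (fun h => ?_) (fun h => ?_) he
    · have := (words_mem hL _).1 h; omega
    · have := (words_mem hR _).1 h; omega
  · intro l hl hS
    obtain ⟨L, R, rfl, hL, hR, h⟩ := split_words hl
    rw [h] at hS
    obtain ⟨hs, hP, hQ⟩ := hS
    have hw := mid_mem_words.1 hl
    obtain ⟨h1, h2⟩ := append_mem_words (fun x hx y hy => hs y hy x hx) hw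
    have := words_length hw
    exact ⟨L.length, R.length, L, R, by simp at this; omega, h2, h1, hP, hQ, rfl⟩

lemma count_straddle (a k : ℕ) :
    count (Split Straddle) a (k + 3) =
      ∑ ij ∈ antidiagonal k, count Avoids (a + ij.2 + 2) ij.1 * count Avoids a ij.2 := by
  refine count_eq_sum
    (fun p => (p.2.1 ++ [a + p.1]) ++ (a + (k + 2)) :: ((a + p.1 + 1) :: p.2.2)) ?_ ?_ ?_
  · intro i j L R hij hL hR hPL hQR
    refine ⟨?_, L ++ [a + j], a + (k + 2), (a + j + 1) :: R, rfl, fun v hv => ?_, fun v hv => ?_,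
      L, a + j, a + j + 1, R, rfl, rfl, by omega, fun x hx => ?_, fun z hz => ?_, hPL, hQR⟩
    · rw [mid_mem_words]
      have h1 : [a + j, a + j + 1] ∈ words (a + j) 2 := by
        rw [mem_words]; rfl
      have h2 := append_mem_words' (append_mem_words' hR h1) (i := i) (L := L) hL
      have h3 : j + 2 + i = k + 2 := by omega
      rw [h3] at h2
      rw [mem_words] at h2 ⊢
      refine List.Perm.trans ?_ h2
      rw [List.perm_iff_count]
      intro b
      simp [List.count_append, List.count_cons]
      omega
    · simp at hv
      rcases hv with hv | rfl
      · have := (words_mem hL v).1 hv; omega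
      · omega
    · simp at hv
      rcases hv with rfl | hv
      · omega
      · have := (words_mem hR v).1 hv; omega
    · have := (words_mem hL x).1 hx; omega
    · have := (words_mem hR z).1 hz; omega
  · intro i j L R i' j' L' R' hij hL hR hij' hL' hR' he
    have := mid_inj (fun h => ?_) (fun h => ?_) he
    · obtain ⟨h1, h2⟩ := this
      exact ⟨(List.append_inj' h1 rfl).1, (List.cons.inj h2).2⟩
    · simp at h
      rcases h with h | h
      · have := (words_mem hL _).1 h; omega
      · omega
    · simp at h
      rcases h with h | h
      · omega
      · have := (words_mem hR _).1 h; omega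
  · intro l hl hS
    obtain ⟨L, R, rfl, hL, hR, h⟩ := split_words hl
    rw [h] at hS
    obtain ⟨L', x, z, R', rfl, rfl, hxz, hL', hR', hAL, hAR⟩ := hS
    have hw := mid_mem_words.1 hl
    have hlen := words_length hw
    have hw' : R' ++ ([x, z] ++ L') ∈ words a (k + 2) := by
      rw [mem_words] at hw ⊢
      refine List.Perm.trans ?_ hw
      rw [List.perm_iff_count]
      intro b
      simp [List.count_append, List.count_cons]
      omega
    obtain ⟨h1, h2⟩ := append_mem_words (by
      intro u hu v hv
      have := hR' u hu
      simp at hv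
      rcases hv with rfl | rfl | hv
      · omega
      · omega
      · have := hL' v hv; omega) hw'
    obtain ⟨h3, h4⟩ := append_mem_words (by
      intro u hu v hv
      have := hL' v hv
      simp at hu
      rcases hu with rfl | rfl <;> omega) h2
    have hx := (words_mem h3 x).1 (by simp)
    have hz := (words_mem h3 z).1 (by simp)
    simp at hx hz
    obtain rfl : x = a + R'.length := by omega
    obtain rfl : z = a + R'.length + 1 := by omega
    exact ⟨L'.length, R'.length, L', R', by simp at hlen; omega, h4, h1, hAL, hAR, rfl⟩

lemma count_avoids_zero (a : ℕ) : count Avoids a 0 = 1 := by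
  have h : Avoids [] := fun x y z h => by simpa using h.mem.1
  simp [count, words, Finset.filter_singleton, h]

lemma count_avoids_succ (a k : ℕ) : count Avoids a (k + 1) =
    ∑ ij ∈ antidiagonal k, count Avoids (a + ij.2) ij.1 * count Avoids a ij.2 := by
  rw [← count_sep]
  refine count_congr fun l hl => ?_
  have hnd := words_nodup hl
  obtain ⟨L, R, rfl, hL, hR, h⟩ := split_words hl
  rw [h, avoids_mid hnd hL hR]

lemma count_avoids (a k : ℕ) : count Avoids a k = catalan k := by
  induction k using Nat.strong_induction_on generalizing a with
  | _ k ih =>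
    rcases k with _ | k
    · rw [count_avoids_zero, catalan_zero]
    · rw [count_avoids_succ, catalan_succ']
      refine Finset.sum_congr rfl fun ij hij => ?_
      rw [Finset.HasAntidiagonal.mem_antidiagonal] at hij
      rw [ih _ (by omega), ih _ (by omega)]

lemma OneConsec.not_avoids {l : List ℕ} (h : OneConsec l) : ¬ Avoids l := by
  obtain ⟨x, y, z, h, -⟩ := h
  exact fun h' => h' _ _ _ h

lemma count_oneConsec_succ (a k : ℕ) : count OneConsec a (k + 1) =
    ∑ ij ∈ antidiagonal k, count OneConsec (a + ij.2) ij.1 * count Avoids a ij.2 +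
    (∑ ij ∈ antidiagonal k, count Avoids (a + ij.2) ij.1 * count OneConsec a ij.2 +
      count (Split Straddle) a (k + 1)) := by
  rw [← count_sep, ← count_sep, ← count_or, ← count_or]
  · refine count_congr fun l hl => ?_
    have hnd := words_nodup hl
    obtain ⟨L, R, rfl, hL, hR, h⟩ := split_words hl
    rw [h, h, h, oneConsec_mid hnd hL hR]
  · intro l hl
    obtain ⟨L, R, rfl, hL, hR, h⟩ := split_words hl
    rw [h, h, h]
    rintro ⟨hs, h1, h2⟩ (⟨-, h3, -⟩ | ⟨L', x, z, R', rfl, rfl, hxz, -⟩)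
    · exact h1.not_avoids h3
    · have := hs x (by simp) z (by simp); omega
  · intro l hl
    obtain ⟨L, R, rfl, hL, hR, h⟩ := split_words hl
    rw [h, h]
    rintro ⟨hs, h1, h2⟩ ⟨L', x, z, R', rfl, rfl, hxz, -⟩
    have := hs x (by simp) z (by simp); omega

lemma oneConsec_length {l : List ℕ} (h : OneConsec l) : 3 ≤ l.length := by
  obtain ⟨x, y, z, h, -⟩ := h
  exact h.1.length_le

lemma count_oneConsec_small {a k : ℕ} (hk : k < 3) : count OneConsec a k = 0 := by
  classical
  rw [count, Finset.card_eq_zero, Finset.filter_eq_empty_iff]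
  intro l hl h
  have := oneConsec_length h
  have := words_length hl
  omega

lemma sum_shift_left (g : ℕ → ℕ) (m : ℕ) :
    ∑ ij ∈ antidiagonal (m + 2), ((ij.1 - 2) * catalan (ij.1 - 2)) * g ij.2 =
      ∑ ij ∈ antidiagonal m, (ij.1 * catalan ij.1) * g ij.2 := by
  rw [Finset.Nat.sum_antidiagonal_succ, Finset.Nat.sum_antidiagonal_succ]
  simp

lemma sum_shift_right (g : ℕ → ℕ) (m : ℕ) :
    ∑ ij ∈ antidiagonal (m + 2), g ij.1 * ((ij.2 - 2) * catalan (ij.2 - 2)) =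
      ∑ ij ∈ antidiagonal m, g ij.1 * (ij.2 * catalan ij.2) := by
  rw [Finset.Nat.sum_antidiagonal_succ', Finset.Nat.sum_antidiagonal_succ']
  simp

/-- The recursion `F (m + 3) = ∑ F i * C j + ∑ C i * F j + C (m + 1)` is solved by
`F k = (k - 2) * C (k - 2)`: with this `F` the two sums combine to
`∑ (i + j) * C i * C j = m * C (m + 1)`, summed over `i + j = m`. -/
lemma count_oneConsec (a k : ℕ) : count OneConsec a k = (k - 2) * catalan (k - 2) := by
  induction k using Nat.strong_induction_on generalizing a with
  | _ k ih =>
    rcases lt_or_ge k 3 with hk | hk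
    · rw [count_oneConsec_small hk]
      interval_cases k <;> simp
    · obtain ⟨m, rfl⟩ := Nat.exists_eq_add_of_le' hk
      rw [count_oneConsec_succ, count_straddle]
      simp_rw [count_avoids]
      rw [← catalan_succ']
      have e1 : ∑ ij ∈ antidiagonal (m + 2),
          count OneConsec (a + ij.2) ij.1 * catalan ij.2 =
          ∑ ij ∈ antidiagonal m, (ij.1 * catalan ij.1) * catalan ij.2 := by
        rw [← sum_shift_left]
        refine Finset.sum_congr rfl fun ij hij => ?_
        rw [Finset.HasAntidiagonal.mem_antidiagonal] at hij
        rw [ih _ (by omega)]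
      have e2 : ∑ ij ∈ antidiagonal (m + 2), catalan ij.1 * count OneConsec a ij.2 =
          ∑ ij ∈ antidiagonal m, catalan ij.1 * (ij.2 * catalan ij.2) := by
        rw [← sum_shift_right]
        refine Finset.sum_congr rfl fun ij hij => ?_
        rw [Finset.HasAntidiagonal.mem_antidiagonal] at hij
        rw [ih _ (by omega)]
      rw [e1, e2, ← add_assoc, ← Finset.sum_add_distrib]
      have e3 : ∑ ij ∈ antidiagonal m, (ij.1 * catalan ij.1 * catalan ij.2 +
          catalan ij.1 * (ij.2 * catalan ij.2)) = m * catalan (m + 1) := by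
        rw [catalan_succ', Finset.mul_sum]
        refine Finset.sum_congr rfl fun ij hij => ?_
        rw [Finset.HasAntidiagonal.mem_antidiagonal] at hij
        rw [← hij]
        ring
      rw [e3, show m + 3 - 2 = m + 1 by omega]
      ring

lemma mul_catalan_eq_choose (m : ℕ) :
    (m + 1) * catalan (m + 1) = Nat.choose (2 * (m + 1)) m := by
  have h1 := succ_mul_catalan_eq_centralBinom (m + 1)
  have h2 := Nat.choose_succ_right_eq (2 * (m + 1)) m
  rw [Nat.centralBinom_eq_two_mul_choose] at h1
  rw [← h1, show 2 * (m + 1) - m = m + 1 + 1 by omega] at h2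
  apply Nat.eq_of_mul_eq_mul_right (show 0 < m + 1 + 1 by omega)
  rw [← h2]
  ring

/-! ### Permutations as words -/

/-- The one-line notation of a permutation of `{0, …, n - 1}`. -/
def toWord {n : ℕ} (π : Equiv.Perm (Fin n)) : List ℕ := List.ofFn fun i => (π i : ℕ)

lemma toWord_mem_words {n : ℕ} (π : Equiv.Perm (Fin n)) : toWord π ∈ words 0 n := by
  rw [mem_words, toWord, List.perm_ext_iff_of_nodup (List.nodup_ofFn.2 fun i j h =>
    π.injective (Fin.ext h)) List.nodup_range']
  intro x
  rw [List.mem_ofFn, List.mem_range'_1]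
  constructor
  · rintro ⟨i, rfl⟩
    have := (π i).isLt
    omega
  · rintro ⟨-, h⟩
    exact ⟨π.symm ⟨x, by omega⟩, by simp⟩

lemma toWord_injective {n : ℕ} : Function.Injective (toWord (n := n)) := by
  intro π σ h
  have := List.ofFn_injective h
  ext i
  exact congrFun this i

lemma exists_toWord_eq {n : ℕ} {l : List ℕ} (h : l ∈ words 0 n) :
    ∃ π : Equiv.Perm (Fin n), toWord π = l := by
  obtain rfl := words_length h
  have hnd := words_nodup h
  let f : Fin l.length → Fin l.length := fun i =>
    ⟨l.get i, by have := (words_mem h (l.get i)).1 (l.get_mem i); omega⟩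
  have hf : Function.Injective f := fun i j hij =>
    (List.nodup_iff_injective_get.1 hnd) (congrArg Fin.val hij)
  refine ⟨Equiv.ofBijective f (Finite.injective_iff_bijective.1 hf), ?_⟩
  simp [toWord, f]

lemma sublist_toWord {n : ℕ} (π : Equiv.Perm (Fin n)) (x y z : ℕ) :
    [x, y, z].Sublist (toWord π) ↔
      ∃ i j k : Fin n, i < j ∧ j < k ∧ (π i : ℕ) = x ∧ (π j : ℕ) = y ∧ (π k : ℕ) = z := by
  rw [toWord, List.ofFn_eq_map, List.sublist_map_iff]
  constructor
  · rintro ⟨l, hl, h⟩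
    rcases l with _ | ⟨i, _ | ⟨j, _ | ⟨k, _ | ⟨m, l⟩⟩⟩⟩ <;> simp at h
    have := (List.pairwise_lt_finRange n).sublist hl
    simp at this
    exact ⟨i, j, k, this.1.1, this.2, h.1.symm, h.2.1.symm, h.2.2.symm⟩
  · rintro ⟨i, j, k, hij, hjk, rfl, rfl, rfl⟩
    refine ⟨[i, j, k], ?_, rfl⟩
    have hp : [i, j, k].Pairwise (· < ·) := by simp [hij, hjk, hij.trans hjk]
    refine List.sublist_of_subperm_of_pairwise (r := (· < ·)) ?_ hp (List.pairwise_lt_finRange n)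
    exact List.Nodup.subperm (hp.imp fun h => h.ne) fun a _ => List.mem_finRange a

lemma infix_toWord {n : ℕ} (π : Equiv.Perm (Fin n)) (x y z : ℕ) :
    [x, y, z] <:+: toWord π ↔
      ∃ i j k : Fin n, (j : ℕ) = i + 1 ∧ (k : ℕ) = i + 2 ∧
        (π i : ℕ) = x ∧ (π j : ℕ) = y ∧ (π k : ℕ) = z := by
  rw [List.infix_iff_getElem?]
  constructor
  · rintro ⟨m, hm, h⟩
    simp [toWord] at hm
    refine ⟨⟨m, by omega⟩, ⟨m + 1, by omega⟩, ⟨m + 2, by omega⟩, rfl, rfl, ?_, ?_, ?_⟩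
    · simpa [toWord, List.getElem?_ofFn, show m < n by omega] using h 0 (by simp)
    · simpa [toWord, List.getElem?_ofFn, show m + 1 < n by omega, add_comm] using h 1 (by simp)
    · simpa [toWord, List.getElem?_ofFn, show m + 2 < n by omega, add_comm] using h 2 (by simp)
  · rintro ⟨i, j, k, hj, hk, rfl, rfl, rfl⟩
    refine ⟨i, by simp [toWord]; omega, fun m hm => ?_⟩
    simp at hm
    have hget : ∀ a : Fin n, (toWord π)[(a : ℕ)]? = some (π a : ℕ) := fun a => by
      simp [toWord]
    interval_cases m
    · simpa using hget i
    · simpa [hj, add_comm] using hget j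
    · simpa [hk, add_comm] using hget k

lemma oneConsec_toWord {n : ℕ} (π : Equiv.Perm (Fin n)) :
    (occ132Count n π = 1 ∧
        ∃ i j k : Fin n, (i < j ∧ j < k ∧ π i < π k ∧ π k < π j) ∧
          (j : ℕ) = (i : ℕ) + 1 ∧ (k : ℕ) = (i : ℕ) + 2) ↔ OneConsec (toWord π) := by
  have inj : ∀ a b : Fin n, (π a : ℕ) = π b → a = b := fun a b h => π.injective (Fin.ext h)
  rw [occ132Count]
  constructor
  · rintro ⟨h1, i, j, k, hocc, hj, hk⟩
    have hsub := (Nat.card_eq_one_iff_unique.1 h1).1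
    refine ⟨π i, π j, π k,
      ⟨(sublist_toWord π _ _ _).2 ⟨i, j, k, hocc.1, hocc.2.1, rfl, rfl, rfl⟩, hocc.2.2⟩,
      (infix_toWord π _ _ _).2 ⟨i, j, k, hj, hk, rfl, rfl, rfl⟩, ?_⟩
    rintro x y z ⟨hs, h2, h3⟩
    obtain ⟨i', j', k', hij, hjk, rfl, rfl, rfl⟩ := (sublist_toWord π _ _ _).1 hs
    have := hsub.elim ⟨(i, j, k), hocc⟩ ⟨(i', j', k'), hij, hjk, h2, h3⟩
    simp only [Subtype.mk.injEq, Prod.mk.injEq] at this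
    obtain ⟨rfl, rfl, rfl⟩ := this
    simp
  · rintro ⟨x, y, z, ⟨-, h1, h2⟩, hinf, huniq⟩
    obtain ⟨i, j, k, hj, hk, rfl, rfl, rfl⟩ := (infix_toWord π _ _ _).1 hinf
    have hocc : i < j ∧ j < k ∧ π i < π k ∧ π k < π j :=
      ⟨Fin.lt_def.2 (by omega), Fin.lt_def.2 (by omega), h1, h2⟩
    refine ⟨Nat.card_eq_one_iff_exists.2 ⟨⟨(i, j, k), hocc⟩, ?_⟩, i, j, k, hocc, hj, hk⟩
    rintro ⟨⟨i', j', k'⟩, hij, hjk, h3, h4⟩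
    obtain ⟨e1, e2, e3⟩ := huniq (π i') (π j') (π k')
      ⟨(sublist_toWord π _ _ _).2 ⟨i', j', k', hij, hjk, rfl, rfl, rfl⟩, h3, h4⟩
    obtain rfl := inj _ _ e1
    obtain rfl := inj _ _ e2
    obtain rfl := inj _ _ e3
    rfl

end One132

/-- For `n ≥ 3`, the number of permutations of `[n]` with exactly one occurrence of
the pattern 132 whose three positions are consecutive is
`(n-2)·C_{n-2} = C(2n-4, n-3)`. -/
theorem one132_consecutive_count (n : ℕ) (hn : 3 ≤ n) :
    Nat.card {π : Equiv.Perm (Fin n) // occ132Count n π = 1 ∧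
        ∃ i j k : Fin n, (i < j ∧ j < k ∧ π i < π k ∧ π k < π j) ∧
          (j : ℕ) = (i : ℕ) + 1 ∧ (k : ℕ) = (i : ℕ) + 2}
      = (n - 2) * catalan (n - 2) ∧
    (n - 2) * catalan (n - 2) = Nat.choose (2 * n - 4) (n - 3) := by
  classical
  constructor
  · simp_rw [One132.oneConsec_toWord]
    rw [← One132.count_oneConsec 0 n, One132.count, Nat.card_eq_fintype_card, Fintype.card_subtype]
    refine Finset.card_nbij One132.toWord (fun π h => ?_) One132.toWord_injective.injOn
      (fun l h => ?_)
    · simp only [Finset.coe_filter, Finset.mem_univ, true_and, Set.mem_ofPred_eq] at h ⊢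
      exact ⟨One132.toWord_mem_words π, h⟩
    · simp only [Finset.coe_filter, Set.mem_ofPred_eq] at h
      obtain ⟨π, rfl⟩ := One132.exists_toWord_eq h.1
      exact ⟨π, by simpa using h.2, rfl⟩
  · obtain ⟨m, rfl⟩ := Nat.exists_eq_add_of_le' hn
    exact One132.mul_catalan_eq_choose m
end

section
/- For n ≥ 3, the number of permutations of [n] containing exactly one occurrence of the pattern 132, such that this occurrence occupies the first, second and last positions (i.e. the unique occurrence is at positions 1, 2, n), is C_{n−3}, the (n−3)-rd Catalan number. -/
/-! ### Words avoiding 132 and binary trees -/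

/-- `L` has no occurrence of the pattern 132, occurrences being taken as three-letter
subwords `x z y` with `x < y < z`. -/
def Avoids132 (L : List ℕ) : Prop :=
  ∀ x y z, List.Sublist [x, z, y] L → x < y → ¬ y < z

/-- The 132-avoiding word on the letters `o, …, o + t.numNodes - 1` attached to a binary tree:
the root is the largest letter, the right subtree gives what follows it and uses the
smallest letters, the left subtree gives what precedes it and uses the remaining letters. -/
def treeWord : ℕ → BinaryTree Unit → List ℕ
  | _, .nil => []
  | o, .node _ l r =>
      treeWord (o + r.numNodes) l ++ (o + (l.numNodes + r.numNodes)) :: treeWord o r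

theorem treeWord_perm (t : BinaryTree Unit) :
    ∀ o, (treeWord o t).Perm (List.range' o t.numNodes) := by
  induction t with
  | nil => intro o; simp [treeWord]
  | node a l r ihl ihr =>
    intro o
    simp only [treeWord, BinaryTree.numNodes]
    have h : List.range' o (l.numNodes + r.numNodes + 1) =
        List.range' o r.numNodes ++ List.range' (o + r.numNodes) l.numNodes
          ++ [o + (l.numNodes + r.numNodes)] := by
      rw [List.range'_append_1, add_comm r.numNodes, ← List.range'_1_concat]
    rw [h]
    refine List.perm_middle.trans (List.Perm.trans ?_ (List.perm_append_singleton _ _).symm)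
    exact (((ihl _).append (ihr _)).trans List.perm_append_comm).cons _

theorem mem_treeWord {o x : ℕ} {t : BinaryTree Unit} :
    x ∈ treeWord o t ↔ o ≤ x ∧ x < o + t.numNodes := by
  rw [(treeWord_perm t o).mem_iff]; simp

theorem length_treeWord (o : ℕ) (t : BinaryTree Unit) : (treeWord o t).length = t.numNodes := by
  rw [(treeWord_perm t o).length_eq]; simp

theorem treeWord_avoids (t : BinaryTree Unit) : ∀ o, Avoids132 (treeWord o t) := by
  induction t with
  | nil => intro o x y z h; simp [treeWord] at h
  | node a l r ihl ihr =>
    intro o x y z h hxy hyz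
    simp only [treeWord] at h
    obtain ⟨p, q, hpq, hp, hq⟩ := List.sublist_append_iff.1 h
    -- The four ways to cut the subword `x z y` between the left part and the rest.
    rcases p with _ | ⟨p1, _ | ⟨p2, _ | ⟨p3, p⟩⟩⟩
    · simp only [List.nil_append] at hpq
      subst hpq
      rcases List.sublist_cons_iff.1 hq with hq | ⟨s, hs, hq⟩
      · exact ihr o x y z hq hxy hyz
      · have hy : y ∈ treeWord o r := hq.subset (by simp at hs; simp [← hs.2])
        rw [mem_treeWord] at hy
        simp at hs
        omega
    · simp at hpq
      obtain ⟨rfl, rfl⟩ := hpq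
      have hx := hp.subset (List.mem_singleton_self x)
      have hy : y ∈ treeWord o r := hq.tail.subset (by simp)
      rw [mem_treeWord] at hx hy
      omega
    · simp at hpq
      obtain ⟨rfl, rfl, rfl⟩ := hpq
      have hx : x ∈ _ := hp.subset (by simp)
      have hz : z ∈ _ := hp.subset (by simp)
      have hy : y ∈ _ := hq.subset (List.mem_singleton_self y)
      rw [List.mem_cons, mem_treeWord] at hy
      rw [mem_treeWord] at hx hz
      omega
    · simp at hpq
      obtain ⟨rfl, rfl, rfl, rfl, rfl⟩ := hpq
      exact ihl _ x y z hp hxy hyz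

theorem treeWord_injective (t : BinaryTree Unit) :
    ∀ o t', treeWord o t = treeWord o t' → t = t' := by
  induction t with
  | nil =>
    intro o t' h
    cases t' with
    | nil => rfl
    | node a l r => simp [treeWord] at h
  | node a l r ihl ihr =>
    intro o t' h
    cases t' with
    | nil => simp [treeWord] at h
    | node a' l' r' =>
      have hlen := congrArg List.length h
      rw [length_treeWord, length_treeWord] at hlen
      simp only [BinaryTree.numNodes] at hlen
      have hs : l'.numNodes + r'.numNodes = l.numNodes + r.numNodes := by omega
      simp only [treeWord, hs] at h
      -- The largest letter occurs once, so it cuts both words at the same place.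
      have key := (List.append_cons_inj_of_notMem (x₁ := treeWord (o + r.numNodes) l)
        (x₂ := treeWord (o + r'.numNodes) l') (z₁ := treeWord o r) (z₂ := treeWord o r')
        (a₁ := o + (l.numNodes + r.numNodes)) (a₂ := o + (l.numNodes + r.numNodes))
        (by rw [mem_treeWord]; omega) (by rw [mem_treeWord]; omega)).1 h
      obtain ⟨h1, -, h2⟩ := key
      have e := ihr _ _ h2
      subst e
      rw [ihl _ _ h1]

/-- If `range' o n` is rearranged as `B ++ A` with every letter of `B` below every letter of
`A`, then `B` and `A` rearrange an initial and a final segment: sorting both parts sorts the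
whole. -/
theorem perm_range'_split {o n : ℕ} {A B : List ℕ} (h : (B ++ A).Perm (List.range' o n))
    (hlt : ∀ b ∈ B, ∀ a ∈ A, b < a) :
    B.Perm (List.range' o B.length) ∧ A.Perm (List.range' (o + B.length) A.length) := by
  have hn : n = B.length + A.length := by simpa using h.length_eq.symm
  subst hn
  have hs : ∀ l : List ℕ, (l.mergeSort (· ≤ ·)).Perm l := fun l => List.mergeSort_perm l _
  have hp : ∀ l : List ℕ, (l.mergeSort (· ≤ ·)).Pairwise (· ≤ ·) := fun l => by
    simpa using List.pairwise_mergeSort (le := fun a b : ℕ => decide (a ≤ b))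
      (by simp; omega) (by simp; omega) l
  have e : B.mergeSort (· ≤ ·) ++ A.mergeSort (· ≤ ·) = List.range' o (B.length + A.length) := by
    refine List.Perm.eq_of_pairwise (le := (· ≤ ·)) (fun a b _ _ => le_antisymm) ?_ ?_
      (((hs B).append (hs A)).trans h)
    · refine List.pairwise_append.2 ⟨hp B, hp A, fun b hb a ha => ?_⟩
      exact (hlt b ((hs B).subset hb) a ((hs A).subset ha)).le
    · exact List.pairwise_le_range'
  rw [← List.range'_append_1] at e
  obtain ⟨e1, e2⟩ := List.append_inj e (by simp)
  exact ⟨e1 ▸ (hs B).symm, e2 ▸ (hs A).symm⟩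

/-- Every 132-avoiding rearrangement of an interval comes from a tree: the letters before the
largest one must all exceed the letters after it. -/
theorem exists_treeWord (n : ℕ) : ∀ (o : ℕ) (L : List ℕ), L.Perm (List.range' o n) →
    Avoids132 L → ∃ t : BinaryTree Unit, t.numNodes = n ∧ treeWord o t = L := by
  induction n using Nat.strong_induction_on with
  | _ n ih =>
    intro o L hL hav
    rcases n with _ | n
    · refine ⟨.nil, rfl, ?_⟩
      simpa [treeWord] using hL.symm
    · have hM : o + n ∈ L := hL.mem_iff.2 (by simp)
      obtain ⟨A, B, rfl⟩ := List.append_of_mem hM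
      have hperm : (B ++ A).Perm (List.range' o n) := by
        have h1 : ((o + n) :: (A ++ B)).Perm ((o + n) :: List.range' o n) := by
          refine (List.perm_middle.symm.trans hL).trans ?_
          rw [List.range'_1_concat]
          exact List.perm_append_singleton _ _
        exact List.perm_append_comm.trans h1.cons_inv
      have hnd : (B ++ A).Nodup := hperm.nodup_iff.2 List.nodup_range'
      have hmem : ∀ x ∈ B ++ A, x < o + n := fun x hx => by
        have := hperm.subset hx
        simp at this
        omega
      have hlt : ∀ b ∈ B, ∀ a ∈ A, b < a := by
        intro b hb a ha
        by_contra hba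
        have hne : a ≠ b := fun h => (List.nodup_append.1 hnd).2.2 b hb a ha h.symm
        refine hav a b (o + n) ?_ (by omega) (hmem b (by simp [hb]))
        exact (List.singleton_sublist.2 ha).append ((List.singleton_sublist.2 hb).cons_cons _)
      obtain ⟨hB, hA⟩ := perm_range'_split hperm hlt
      have hn : n = B.length + A.length := by simpa using hperm.length_eq.symm
      obtain ⟨l, hl, hl'⟩ := ih A.length (by omega) _ A hA fun x y z hs =>
        hav x y z (hs.trans (List.sublist_append_left _ _))
      obtain ⟨r, hr, hr'⟩ := ih B.length (by omega) _ B hB fun x y z hs =>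
        hav x y z (hs.trans ((List.sublist_cons_self _ _).trans (List.sublist_append_right _ _)))
      refine ⟨.node () l r, by simp [BinaryTree.numNodes]; omega, ?_⟩
      rw [treeWord, hl, hr, hl', hr', hn, add_comm A.length]

/-! ### Permutations as words -/

/-- One-line notation of a permutation of `Fin n`, as a word in the letters `0, …, n - 1`. -/
def oneLine {n : ℕ} (π : Equiv.Perm (Fin n)) : List ℕ := List.ofFn fun i => (π i : ℕ)

theorem oneLine_injective {n : ℕ} : Function.Injective (oneLine (n := n)) := by
  intro π σ h
  ext i
  exact congrFun (List.ofFn_injective h) i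

theorem oneLine_perm {n : ℕ} (π : Equiv.Perm (Fin n)) : (oneLine π).Perm (List.range n) := by
  refine (List.perm_ext_iff_of_nodup ?_ List.nodup_range).2 fun x => ?_
  · exact List.nodup_ofFn.2 (Fin.val_injective.comp π.injective)
  · simp only [oneLine, List.mem_ofFn, List.mem_range]
    exact ⟨by rintro ⟨i, rfl⟩; exact (π i).2, fun hx => ⟨π.symm ⟨x, hx⟩, by simp⟩⟩

theorem exists_oneLine {n : ℕ} {L : List ℕ} (h : L.Perm (List.range n)) :
    ∃ π : Equiv.Perm (Fin n), oneLine π = L := by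
  have hlen : L.length = n := by simpa using h.length_eq
  subst hlen
  have hinj : Function.Injective
      fun i : Fin L.length => (⟨L.get i, by simpa using h.subset (L.get_mem i)⟩ : Fin L.length) :=
    fun i j hij => (h.nodup_iff.2 List.nodup_range).injective_get (by simpa using hij)
  exact ⟨Equiv.ofBijective _ (Finite.injective_iff_bijective.1 hinj), by simp [oneLine]⟩

theorem sublist_oneLine_iff {n : ℕ} (π : Equiv.Perm (Fin n)) (x z y : ℕ) :
    List.Sublist [x, z, y] (oneLine π) ↔
      ∃ i j k, i < j ∧ j < k ∧ (π i : ℕ) = x ∧ (π j : ℕ) = z ∧ (π k : ℕ) = y := by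
  rw [oneLine, List.ofFn_eq_map, List.sublist_map_iff]
  constructor
  · rintro ⟨l, hl, he⟩
    have hp := (List.pairwise_lt_finRange n).sublist hl
    rcases l with _ | ⟨i, _ | ⟨j, _ | ⟨k, _ | ⟨m, l⟩⟩⟩⟩ <;> simp at he
    simp at hp
    exact ⟨i, j, k, hp.1.1, hp.2, he.1.symm, he.2.1.symm, he.2.2.symm⟩
  · rintro ⟨i, j, k, hij, hjk, rfl, rfl, rfl⟩
    refine ⟨[i, j, k], ?_, rfl⟩
    have hp : [i, j, k].Pairwise (· < ·) := by simp [hij, hjk, hij.trans hjk]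
    exact List.sublist_of_subperm_of_pairwise
      (List.subperm_of_subset (hp.imp fun h => h.ne) fun a _ => List.mem_finRange a)
      hp (List.pairwise_lt_finRange n)

theorem occ132Count_eq_one_iff {n : ℕ} (π : Equiv.Perm (Fin n)) {p q r : Fin n}
    (hpq : p < q) (hqr : q < r) (h1 : π p < π r) (h2 : π r < π q) :
    occ132Count n π = 1 ↔ ∀ i j k, i < j → j < k → π i < π k → π k < π j →
      i = p ∧ j = q ∧ k = r := by
  rw [occ132Count, Nat.card_eq_one_iff_unique]
  constructor
  · rintro ⟨hs, -⟩ i j k hij hjk hik hkj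
    have := Subsingleton.elim (α := {t : Fin n × Fin n × Fin n //
      t.1 < t.2.1 ∧ t.2.1 < t.2.2 ∧ π t.1 < π t.2.2 ∧ π t.2.2 < π t.2.1})
      ⟨(i, j, k), hij, hjk, hik, hkj⟩ ⟨(p, q, r), hpq, hqr, h1, h2⟩
    simpa using this
  · intro h
    refine ⟨⟨?_⟩, ⟨⟨(p, q, r), hpq, hqr, h1, h2⟩⟩⟩
    rintro ⟨⟨i, j, k⟩, ha⟩ ⟨⟨i', j', k'⟩, hb⟩
    obtain ⟨rfl, rfl, rfl⟩ := h i j k ha.1 ha.2.1 ha.2.2.1 ha.2.2.2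
    obtain ⟨rfl, rfl, rfl⟩ := h i' j' k' hb.1 hb.2.1 hb.2.2.1 hb.2.2.2
    rfl

/-! ### Shape of the permutations to be counted -/

/-- The word `m (m+2) w (m+1)`, where `w` is the 132-avoiding word of `t`. -/
def wrapWord (m : ℕ) (t : BinaryTree Unit) : List ℕ :=
  m :: (m + 2) :: (treeWord 0 t ++ [m + 1])

theorem wrapWord_injective (m : ℕ) : Function.Injective (wrapWord m) := by
  intro t t' h
  simp only [wrapWord, List.cons.injEq, true_and, List.append_cancel_right_eq] at h
  exact treeWord_injective t 0 t' h

theorem wrapWord_perm (t : BinaryTree Unit) :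
    (wrapWord t.numNodes t).Perm (List.range (t.numNodes + 3)) := by
  have h := treeWord_perm t 0
  rw [← List.range_eq_range'] at h
  simp only [List.range_succ, wrapWord]
  refine (((h.append_right _).cons _).cons _).trans ?_
  rw [List.perm_iff_count]
  intro a
  simp [List.count_cons]
  ring

theorem sublist_wrapWord {t : BinaryTree Unit} {x y z : ℕ}
    (h : List.Sublist [x, z, y] (wrapWord t.numNodes t)) (hxy : x < y) (hyz : y < z) :
    x = t.numNodes ∧ z = t.numNodes + 2 ∧ y = t.numNodes + 1 := by
  have hmem : ∀ v ∈ treeWord 0 t, v < t.numNodes := fun v hv => by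
    rw [mem_treeWord] at hv; omega
  have hz : z ∈ (wrapWord t.numNodes t).tail := h.tail.subset (by simp)
  have hy : y ∈ treeWord 0 t ++ [t.numNodes + 1] := h.tail.tail.subset (by simp)
  simp only [wrapWord, List.tail_cons, List.mem_cons, List.mem_append, List.not_mem_nil,
    or_false] at hz hy
  rcases hy with hy | rfl
  · -- A 132 ending inside `w` must lie entirely in `w`.
    exfalso
    have hy' := hmem y hy
    rw [wrapWord, List.sublist_cons_iff] at h
    rcases h with h | ⟨s, hs, h⟩
    · rw [List.sublist_cons_iff] at h
      rcases h with h | ⟨s, hs, h⟩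
      · obtain ⟨p, q, hpq, hp, hq⟩ := List.sublist_append_iff.1 h
        have hq' := List.sublist_singleton.1 hq
        rcases hq' with rfl | rfl
        · rw [List.append_nil] at hpq
          subst hpq
          exact treeWord_avoids t 0 x y z hp hxy hyz
        · have := congrArg List.getLast? hpq
          simp at this
          omega
      · simp at hs; omega
    · simp at hs; omega
  · have hz' : z = t.numNodes + 2 := by
      rcases hz with hz | hz | hz
      · exact hz
      · have := hmem z hz; omega
      · omega
    subst hz'
    refine ⟨?_, rfl, rfl⟩
    -- The letter `m + 2` is in second position, so only the first letter can precede it.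
    rw [wrapWord, List.sublist_cons_iff] at h
    rcases h with h | ⟨s, hs, h⟩
    · have hz2 : t.numNodes + 2 ∈ treeWord 0 t ++ [t.numNodes + 1] :=
        h.tail.subset (by simp)
      simp at hz2
      have := hmem _ hz2
      omega
    · simp at hs; exact hs.1

theorem oneLine_eq {m : ℕ} (π : Equiv.Perm (Fin (m + 3))) :
    ∃ w : List ℕ, oneLine π = (π 0 : ℕ) :: (π 1 : ℕ) :: (w ++ [(π (Fin.last _) : ℕ)]) := by
  refine ⟨List.ofFn fun i : Fin m => (π i.castSucc.succ.succ : ℕ), ?_⟩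
  rw [oneLine, List.ofFn_succ, List.ofFn_succ, List.ofFn_succ']
  simp [List.concat_eq_append, Fin.succ_last]

/-- In a permutation whose only 132 is at the first, second and last positions, with letters
`a c b`, every other letter `v` lies below `a`: otherwise `a c v` or `a v b` is another
occurrence. This forces `a`, `b`, `c` to be the three largest letters. -/
theorem image_oneLine (m : ℕ) :
    oneLine '' {π : Equiv.Perm (Fin (m + 3)) | occ132Count (m + 3) π = 1 ∧
      π 0 < π (Fin.last _) ∧ π (Fin.last _) < π 1} =
    wrapWord m '' (BinaryTree.treesOfNumNodesEq m : Set (BinaryTree Unit)) := by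
  have h01 : (0 : Fin (m + 3)) < 1 := by simp
  have h1l : (1 : Fin (m + 3)) < Fin.last _ := by simp [Fin.lt_def]
  ext L
  simp only [Set.mem_image, Set.mem_ofPred_eq, Finset.mem_coe, BinaryTree.mem_treesOfNumNodesEq]
  constructor
  · rintro ⟨π, ⟨hocc, hab, hbc⟩, rfl⟩
    rw [occ132Count_eq_one_iff π h01 h1l hab hbc] at hocc
    have hsub : ∀ x y z, List.Sublist [x, z, y] (oneLine π) → x < y → y < z →
        x = π 0 ∧ z = π 1 ∧ y = π (Fin.last _) := by
      intro x y z hs hxy hyz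
      obtain ⟨i, j, k, hij, hjk, rfl, rfl, rfl⟩ := (sublist_oneLine_iff π x z y).1 hs
      obtain ⟨rfl, rfl, rfl⟩ := hocc i j k hij hjk hxy hyz
      exact ⟨rfl, rfl, rfl⟩
    have hperm := oneLine_perm π
    have hnd := hperm.nodup_iff.2 List.nodup_range
    obtain ⟨w, hw⟩ := oneLine_eq π
    rw [hw] at hsub hperm hnd ⊢
    rw [Fin.lt_def] at hab hbc
    generalize (π 0 : ℕ) = a at *
    generalize (π 1 : ℕ) = c at *
    generalize (π (Fin.last _) : ℕ) = b at *
    have hva : ∀ v ∈ w, v < a := by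
      intro v hv
      have hne : v ≠ a ∧ v ≠ b ∧ v ≠ c := by
        simp only [List.nodup_cons, List.mem_cons, List.mem_append, List.nodup_append,
          not_or] at hnd
        exact ⟨fun h => hnd.1.2.1 (h ▸ hv), fun h => hnd.2.2.2.2 v hv b (.inl rfl) h,
          fun h => hnd.2.1.1 (h ▸ hv)⟩
      by_contra hcon
      have hs1 : List.Sublist [a, c, v] (a :: c :: (w ++ [b])) :=
        ((List.singleton_sublist.2 (List.mem_append_left _ hv)).cons_cons _).cons_cons _
      have hs2 : List.Sublist [a, v, b] (a :: c :: (w ++ [b])) :=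
        (((List.singleton_sublist.2 hv).append (List.Sublist.refl [b])).cons _).cons_cons _
      have g1 := hsub a v c hs1 (by omega)
      have g2 := hsub a b v hs2 hab
      omega
    have hp2 : (w ++ [a, b, c]).Perm (List.range' 0 (m + 3)) := by
      rw [← List.range_eq_range']
      refine List.Perm.trans ?_ hperm
      rw [List.perm_iff_count]
      intro d
      simp [List.count_cons]
      ring
    have hlen : w.length = m := by simpa using hp2.length_eq
    obtain ⟨hw1, hw2⟩ := perm_range'_split hp2 (by simp; intro v hv; have := hva v hv; omega)
    have hw3 : [a, b, c] = List.range' (0 + w.length) [a, b, c].length :=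
      hw2.eq_of_pairwise (le := (· ≤ ·)) (fun a b _ _ => le_antisymm)
        (by simp; omega) List.pairwise_le_range'
    simp [List.range'_succ, hlen] at hw3
    obtain ⟨rfl, rfl, rfl⟩ := hw3
    rw [hlen] at hw1
    obtain ⟨t, ht, ht'⟩ := exists_treeWord _ 0 w hw1 (by
      intro x y z hs hxy hyz
      have h1 : List.Sublist [x, z, y] (a :: (a + 1 + 1) :: (w ++ [a + 1])) :=
        ((hs.trans (List.sublist_append_left _ _)).cons _).cons _
      have h2 := hva x (hs.subset (by simp))
      have h3 := hsub x y z h1 hxy hyz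
      omega)
    exact ⟨t, ht, by rw [wrapWord, ht']⟩
  · rintro ⟨t, rfl, rfl⟩
    obtain ⟨π, hπ⟩ := exists_oneLine (wrapWord_perm t)
    refine ⟨π, ?_, hπ⟩
    obtain ⟨w, hw⟩ := oneLine_eq π
    have hcmp := hw.symm.trans hπ
    simp only [wrapWord, List.cons.injEq] at hcmp
    obtain ⟨h0, h1, hcmp⟩ := hcmp
    obtain ⟨-, hl⟩ := List.append_inj' hcmp rfl
    simp only [List.cons.injEq, and_true] at hl
    have hab : π 0 < π (Fin.last _) := by rw [Fin.lt_def]; omega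
    have hbc : π (Fin.last _) < π 1 := by rw [Fin.lt_def]; omega
    refine ⟨(occ132Count_eq_one_iff π h01 h1l hab hbc).2 ?_, hab, hbc⟩
    intro i j k hij hjk hik hkj
    have hs := (sublist_oneLine_iff π _ _ _).2 ⟨i, j, k, hij, hjk, rfl, rfl, rfl⟩
    rw [hπ] at hs
    obtain ⟨e1, e2, e3⟩ := sublist_wrapWord hs hik hkj
    exact ⟨π.injective (Fin.ext (by omega)), π.injective (Fin.ext (by omega)),
      π.injective (Fin.ext (by omega))⟩

/-- For `n ≥ 3`, the number of permutations of `[n]` with exactly one occurrence of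
the pattern 132, that occurrence occupying the first, second and last positions
(positions `1, 2, n`, i.e. indices `0, 1, n-1`), is the Catalan number `C_{n-3}`. -/
theorem one132_first_second_last_count (n : ℕ) (hn : 3 ≤ n) :
    Nat.card {π : Equiv.Perm (Fin n) // occ132Count n π = 1 ∧
        π ⟨0, by omega⟩ < π ⟨n - 1, by omega⟩ ∧
        π ⟨n - 1, by omega⟩ < π ⟨1, by omega⟩}
      = catalan (n - 3) := by
  obtain ⟨m, rfl⟩ := Nat.exists_eq_add_of_le' hn
  have h := congrArg Set.ncard (image_oneLine m)
  rw [Set.ncard_image_of_injective _ oneLine_injective,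
    Set.ncard_image_of_injective _ (wrapWord_injective m), Set.ncard_coe_finset,
    BinaryTree.treesOfNumNodesEq_card_eq_catalan] at h
  exact h
end

section
/- (Bóna) For n ≥ 3, the number of permutations of [n] containing exactly one occurrence of the pattern 132 is C(2n−3, n−3). -/
namespace Bona132

/-! ### Two- and three-letter subwords -/

section Sublists
variable {α : Type*}

theorem sub2_cons {b c x : α} {l : List α} :
    [b, c].Sublist (x :: l) ↔ [b, c].Sublist l ∨ (b = x ∧ c ∈ l) := by
  simp [List.sublist_cons_iff, and_comm]

theorem sub3_cons {a b c x : α} {l : List α} :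
    [a, b, c].Sublist (x :: l) ↔ [a, b, c].Sublist l ∨ (a = x ∧ [b, c].Sublist l) := by
  simp only [List.sublist_cons_iff, List.cons.injEq]
  aesop

theorem sub2_append {b c : α} {L R : List α} : [b, c].Sublist (L ++ R) ↔
    [b, c].Sublist L ∨ (b ∈ L ∧ c ∈ R) ∨ [b, c].Sublist R := by
  induction L with
  | nil => simp
  | cons x L ih =>
    simp only [List.cons_append, sub2_cons, List.mem_cons, List.mem_append, ih]
    tauto

theorem sub3_append {a b c : α} {L R : List α} : [a, b, c].Sublist (L ++ R) ↔
    [a, b, c].Sublist L ∨ ([a, b].Sublist L ∧ c ∈ R) ∨ (a ∈ L ∧ [b, c].Sublist R) ∨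
      [a, b, c].Sublist R := by
  induction L with
  | nil => simp
  | cons x L ih =>
    simp only [List.cons_append, sub2_cons, sub3_cons, List.mem_cons, ih, sub2_append]
    generalize [a, b, c].Sublist L = p1, [a, b].Sublist L = p2, (c ∈ R) = p3, (a ∈ L) = p4,
      [b, c].Sublist R = p5, [a, b, c].Sublist R = p6, (a = x) = p7, [b, c].Sublist L = p8,
      (b ∈ L) = p9
    clear ih
    grind

theorem sub2_mem {b c : α} {l : List α} (h : [b, c].Sublist l) : b ∈ l ∧ c ∈ l := by
  have := h.subset; simp_all

theorem sub3_mem {a b c : α} {l : List α} (h : [a, b, c].Sublist l) : a ∈ l ∧ b ∈ l ∧ c ∈ l := by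
  have := h.subset; simp_all
end Sublists

/-! ### Occurrences of 132 and the split at the largest letter -/

section Occ
variable {α : Type*} [LinearOrder α]

/-- The letters `a, b, c` form, in this order, an occurrence of 132 in the word `w`. For words
without repeated letters, triples of letters correspond to triples of positions. -/
def Occ (w : List α) (a b c : α) : Prop := [a, b, c].Sublist w ∧ a < c ∧ c < b

/-- The word `w` has no occurrence of 132. -/
def Avoids (w : List α) : Prop := ∀ a b c, ¬ Occ w a b c

/-- The word `w` has exactly one occurrence of 132, as a triple of letters. -/
def ExOne (w : List α) : Prop :=
  ∃ a b c, Occ w a b c ∧ ∀ a' b' c', Occ w a' b' c' → a' = a ∧ b' = b ∧ c' = c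

theorem Occ.mem {w : List α} {a b c : α} (h : Occ w a b c) : a ∈ w ∧ b ∈ w ∧ c ∈ w := sub3_mem h.1

/-- An occurrence in `L M R`, with `M` the largest letter, lies in `L`, lies in `R`, uses `M` as its
largest letter, or straddles `M` without using it. -/
theorem occ_split {L R : List α} {M : α} (hL : ∀ x ∈ L, x < M) (hR : ∀ x ∈ R, x < M) (a b c : α) :
    Occ (L ++ M :: R) a b c ↔ Occ L a b c ∨ Occ R a b c ∨ (a ∈ L ∧ b = M ∧ c ∈ R ∧ a < c) ∨
      (a ∈ L ∧ [b, c].Sublist R ∧ a < c ∧ c < b) ∨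
      ([a, b].Sublist L ∧ c ∈ R ∧ a < c ∧ c < b) := by
  unfold Occ
  simp only [sub3_append, sub2_cons, sub3_cons, List.mem_cons]
  constructor
  · rintro ⟨h | ⟨h, rfl | h'⟩ | ⟨h, h' | ⟨rfl, h'⟩⟩ | h | ⟨rfl, h⟩, h1, h2⟩
    · tauto
    · exact absurd (h2.trans (hL b (sub2_mem h).2)) (lt_irrefl _)
    · tauto
    · tauto
    · tauto
    · tauto
    · exact absurd (h1.trans (hR c (sub2_mem h).2)) (lt_irrefl _)
  · rintro (h | h | ⟨h, rfl, h', h''⟩ | h | h)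
    · tauto
    · tauto
    · exact ⟨.inr (.inr (.inl ⟨h, .inr ⟨rfl, h'⟩⟩)), h'', hR c h'⟩
    · tauto
    · tauto

/-- No occurrence crosses `M` when every letter of `R` is below every letter of `L`. -/
theorem occ_split_lower {L R : List α} {M : α} (hL : ∀ x ∈ L, x < M) (hR : ∀ x ∈ R, x < M)
    (hRL : ∀ x ∈ R, ∀ y ∈ L, x < y) (a b c : α) :
    Occ (L ++ M :: R) a b c ↔ Occ L a b c ∨ Occ R a b c := by
  rw [occ_split hL hR]
  constructor
  · rintro (h | h | ⟨h, -, h', h''⟩ | ⟨h, h', h'', -⟩ | ⟨h, h', h'', -⟩)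
    · exact .inl h
    · exact .inr h
    · exact absurd (hRL _ h' _ h) h''.asymm
    · exact absurd (hRL _ (sub2_mem h').2 _ h) h''.asymm
    · exact absurd (hRL _ h' _ (sub2_mem h).1) h''.asymm
  · tauto

/-- A pair `x ∈ L`, `y ∈ R` with `x < y` would give the occurrence `x M y`, so avoidance forces
`R` below `L`. -/
theorem avoids_split {L R : List α} {M : α} (hL : ∀ x ∈ L, x < M) (hR : ∀ x ∈ R, x < M) :
    Avoids (L ++ M :: R) ↔ (∀ x ∈ R, ∀ y ∈ L, x ≤ y) ∧ Avoids R ∧ Avoids L := by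
  constructor
  · intro h
    refine ⟨fun x hx y hy => ?_, fun a b c o => ?_, fun a b c o => ?_⟩
    · by_contra! hlt
      exact h y M x ((occ_split hL hR _ _ _).2 (.inr (.inr (.inl ⟨hy, rfl, hx, hlt⟩))))
    · exact h a b c ((occ_split hL hR _ _ _).2 (.inr (.inl o)))
    · exact h a b c ((occ_split hL hR _ _ _).2 (.inl o))
  · rintro ⟨h, h1, h2⟩ a b c o
    rcases (occ_split hL hR _ _ _).1 o with o | o | ⟨h, -, h', h''⟩ | ⟨h, h', h'', -⟩ | ⟨h, h', h'', -⟩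
    · exact h2 _ _ _ o
    · exact h1 _ _ _ o
    · exact absurd h'' (by grind)
    · exact absurd h'' (by have := sub2_mem h'; grind)
    · exact absurd h'' (by have := sub2_mem h; grind)

theorem exOne_split_lower {L R : List α} {M : α} (hL : ∀ x ∈ L, x < M) (hR : ∀ x ∈ R, x < M)
    (hRL : ∀ x ∈ R, ∀ y ∈ L, x < y) :
    ExOne (L ++ M :: R) ↔ (ExOne R ∧ Avoids L) ∨ (Avoids R ∧ ExOne L) := by
  have hs := occ_split_lower hL hR hRL
  have hd : ∀ {a b c a' b' c'}, Occ L a b c → Occ R a' b' c' → a ≠ a' := by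
    rintro a b c a' b' c' o o' rfl
    exact lt_irrefl _ (hRL a o'.mem.1 a o.mem.1)
  constructor
  · rintro ⟨a, b, c, o, h⟩
    rcases (hs a b c).1 o with o' | o'
    · refine .inr ⟨fun a' b' c' o'' => ?_, a, b, c, o', fun a' b' c' o'' => ?_⟩
      · exact hd o' o'' (h a' b' c' ((hs _ _ _).2 (.inr o''))).1.symm
      · exact h a' b' c' ((hs _ _ _).2 (.inl o''))
    · refine .inl ⟨⟨a, b, c, o', fun a' b' c' o'' => ?_⟩, fun a' b' c' o'' => ?_⟩
      · exact h a' b' c' ((hs _ _ _).2 (.inr o''))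
      · exact hd o'' o' (h a' b' c' ((hs _ _ _).2 (.inl o''))).1
  · rintro (⟨⟨a, b, c, o, h⟩, h'⟩ | ⟨h', ⟨a, b, c, o, h⟩⟩)
    · refine ⟨a, b, c, (hs _ _ _).2 (.inr o), fun a' b' c' o' => ?_⟩
      rcases (hs _ _ _).1 o' with o' | o'
      · exact absurd o' (h' _ _ _)
      · exact h _ _ _ o'
    · refine ⟨a, b, c, (hs _ _ _).2 (.inl o), fun a' b' c' o' => ?_⟩
      rcases (hs _ _ _).1 o' with o' | o'
      · exact h _ _ _ o'
      · exact absurd o' (h' _ _ _)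

omit [LinearOrder α] in
/-- Nothing follows the last letter of a word without repeated letters. -/
theorem sub2_last {X : List α} {l b : α} (hn : l ∉ X) : ¬ [l, b].Sublist (X ++ [l]) := by
  intro h
  rcases sub2_append.1 h with h | h | h
  · exact hn (sub2_mem h).1
  · exact hn h.1
  · simpa using h.length_le

/-- `(l, r)` is the only pair `l < r` with `l` satisfying `P` and `r` satisfying `Q`. -/
def UniquePair (P Q : α → Prop) (l r : α) : Prop :=
  P l ∧ Q r ∧ l < r ∧ ∀ l' r', P l' → Q r' → l' < r' → l' = l ∧ r' = r

/-- When some `l ∈ L` is below some `r ∈ R`, the triple `l M r` is the single occurrence. Then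
`(l, r)` is the only such pair, and `l` ends `L`: a later letter `b` of `L` would have to exceed `r`
(else `(b, r)` is another pair), making `l b r` a second occurrence. -/
theorem exOne_split_nonlower {L R : List α} {M : α} (hL : ∀ x ∈ L, x < M) (hR : ∀ x ∈ R, x < M)
    (hd : ∀ x ∈ L, x ∉ R) (hn : L.Nodup) (hRL : ¬ ∀ x ∈ R, ∀ y ∈ L, x < y) :
    ExOne (L ++ M :: R) ↔ ∃ l r, UniquePair (· ∈ L) (· ∈ R) l r ∧ Avoids R ∧
      ∃ X, L = X ++ [l] ∧ Avoids X := by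
  have hs := occ_split hL hR
  constructor
  · rintro ⟨a, b, c, o, h⟩
    push Not at hRL
    obtain ⟨r, hr, l, hl, hlr⟩ := hRL
    have hlr : l < r := lt_of_le_of_ne hlr (by rintro rfl; exact hd _ hl hr)
    obtain ⟨rfl, rfl, rfl⟩ := h l M r ((hs _ _ _).2 (.inr (.inr (.inl ⟨hl, rfl, hr, hlr⟩))))
    have hu : UniquePair (· ∈ L) (· ∈ R) l r := by
      refine ⟨hl, hr, hlr, fun l' r' hl' hr' h' => ?_⟩
      have := h l' M r' ((hs _ _ _).2 (.inr (.inr (.inl ⟨hl', rfl, hr', h'⟩))))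
      exact ⟨this.1, this.2.2⟩
    refine ⟨l, r, hu, ?_, ?_⟩
    · intro a b c o
      have := h a b c ((hs _ _ _).2 (.inr (.inl o)))
      exact hd l hl (this.1 ▸ o.mem.1)
    · have hLa : Avoids L := by
        intro a b c o
        have := h a b c ((hs _ _ _).2 (.inl o))
        exact lt_irrefl _ (this.2.1 ▸ hL b o.mem.2.1)
      have hlast : ∀ b, ¬ [l, b].Sublist L := by
        intro b hb
        have hbL := (sub2_mem hb).2
        have hbl : b ≠ l := by
          rintro rfl
          simpa using hn.sublist hb
        have hbr : b ≠ r := by rintro rfl; exact hd _ hbL hr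
        rcases lt_or_gt_of_ne hbr with h' | h'
        · exact hbl (hu.2.2.2 b r hbL hr h').1
        · have := h l b r ((hs _ _ _).2 (.inr (.inr (.inr (.inr ⟨hb, hr, hlr, h'⟩)))))
          exact lt_irrefl _ (this.2.1 ▸ hL b hbL)
      obtain ⟨X, Y, rfl⟩ := List.append_of_mem hl
      cases Y with
      | nil =>
        exact ⟨X, rfl, fun a b c o => hLa a b c ⟨o.1.trans (by simp), o.2⟩⟩
      | cons y Y =>
        exact absurd (sub2_append.2 (.inr (.inr (by simp)))) (hlast y)
  · rintro ⟨l, r, hu, hRa, X, rfl, hX⟩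
    have hlX : l ∉ X := by
      intro h
      simp [List.nodup_append] at hn
      exact hn.2 l h rfl
    refine ⟨l, M, r, (hs _ _ _).2 (.inr (.inr (.inl ⟨hu.1, rfl, hu.2.1, hu.2.2.1⟩))), ?_⟩
    intro a b c o
    rcases (hs _ _ _).1 o with o | o | ⟨h, h1, h', h''⟩ | ⟨h, h', h'', h3⟩ | ⟨h, h', h'', h3⟩
    · rcases sub3_append.1 o.1 with h | ⟨h, h'⟩ | ⟨h, h'⟩ | h
      · exact absurd ⟨h, o.2⟩ (hX a b c)
      · -- `c = l`, and then `(a, r)` is a second pair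
        obtain rfl : c = l := by simpa using h'
        have ha : a ∈ X ++ [c] := by simp [(sub2_mem h).1]
        have := (hu.2.2.2 a r ha hu.2.1 (o.2.1.trans hu.2.2.1)).1
        exact absurd (this ▸ (sub2_mem h).1) hlX
      · simpa using h'.length_le
      · simpa using h.length_le
    · exact absurd o (hRa a b c)
    · have := hu.2.2.2 a c h h' h''
      exact ⟨this.1, h1, this.2⟩
    · -- `(a, b)` and `(a, c)` would be two different pairs
      have h4 := hu.2.2.2 a c h (sub2_mem h').2 h''
      have h5 := hu.2.2.2 a b h (sub2_mem h').1 (h''.trans h3)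
      exact absurd (h4.2.trans h5.2.symm) h3.ne
    · have h4 := hu.2.2.2 a c (sub2_mem h).1 h' h''
      rw [h4.1] at h
      exact absurd h (sub2_last hlX)
end Occ
/-! ### The recurrence for `C(2n-3, n-3)` -/

section Series
open PowerSeries

/-- The binomial coefficient `C(2n-3, n-3)`, set to `0` for `n < 3`, where the truncated
subtractions would give `1`. -/
def bona (n : ℕ) : ℕ := if n < 3 then 0 else (2 * n - 3).choose (n - 3)

/-- The generating series of the Catalan numbers, over `ℤ`. -/
noncomputable def catS : ℤ⟦X⟧ := PowerSeries.mk fun n => (catalan n : ℤ)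
/-- The series `∑ C(2n+k, n) Xⁿ`. -/
noncomputable def diagS (k : ℕ) : ℤ⟦X⟧ := PowerSeries.mk fun n => ((2 * n + k).choose n : ℤ)

theorem catS_eq : catS = 1 + X * catS ^ 2 := by
  ext n
  cases n with
  | zero => simp [catS]
  | succ n =>
    rw [map_add, coeff_succ_X_mul, sq, coeff_mul]
    simp [catS, catalan_succ', coeff_one]

/-- Pascal's rule, in terms of series. -/
theorem diagS_succ (k : ℕ) : diagS (k + 1) = diagS k + X * diagS (k + 2) := by
  ext n
  cases n with
  | zero => simp [diagS]
  | succ n =>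
    rw [map_add, coeff_succ_X_mul]
    simp only [diagS, coeff_mk]
    rw [show 2 * (n + 1) + (k + 1) = (2 * n + (k + 2)) + 1 by ring, Nat.choose_succ_succ,
      show 2 * (n + 1) + k = 2 * n + (k + 2) by ring]
    push_cast; ring

theorem diagS_zero : diagS 0 = 1 + 2 * (X * diagS 1) := by
  ext n
  cases n with
  | zero => simp [diagS]
  | succ n =>
    have : (2 : ℤ⟦X⟧) = C 2 := by simp
    rw [this, map_add, coeff_C_mul, coeff_succ_X_mul]
    simp only [diagS, coeff_mk, coeff_one]
    have h := Nat.choose_symm_half n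
    rw [show 2 * (n + 1) + 0 = (2 * n + 1) + 1 by ring, Nat.choose_succ_succ, h]
    push_cast; simp; ring

/-- The Catalan number is `C(2n, n) - C(2n, n-1)`. -/
theorem catS_diag : catS = diagS 0 - X * diagS 2 := by
  ext n
  cases n with
  | zero => simp [catS, diagS]
  | succ n =>
    rw [map_sub, coeff_succ_X_mul]
    simp only [catS, diagS, coeff_mk]
    have h1 := succ_mul_catalan_eq_centralBinom (n + 1)
    rw [Nat.centralBinom_eq_two_mul_choose] at h1
    have h2 := Nat.choose_succ_right_eq (2 * (n + 1)) n
    rw [show 2 * (n + 1) - n = n + 2 by omega] at h2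
    rw [show 2 * n + 2 = 2 * (n + 1) by ring, add_zero]
    zify at h1 h2
    have : ((n : ℤ) + 1 + 1) ≠ 0 := by positivity
    apply mul_left_cancel₀ this
    linear_combination h1 - h2

/-- The case `k = 3` of `∑ C(2n+k, n) Xⁿ = Cᵏ / √(1-4X)`, where `C` is the Catalan series and
`1 - 2XC` is the square root. -/
theorem diagS_three : (1 - 2 * X * catS) * diagS 3 = catS ^ 3 := by
  have hC := catS_eq
  have h0 := diagS_zero
  have h1 := diagS_succ 0
  have h2 := diagS_succ 1
  have hc := catS_diag
  simp only [zero_add, Nat.reduceAdd] at h1 h2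
  have hS0 : (1 - 2 * X * catS) ≠ 0 := by
    intro h
    have := congrArg constantCoeff h
    simp at this
  -- `(1 - 2XC)² = 1 - 4X` by the quadratic equation of `C`
  have e0 : (1 - 2 * X * catS) * diagS 0 = 1 := by
    apply mul_left_cancel₀ hS0
    have h4 : (1 - 4 * X) * diagS 0 = 1 - 2 * X * catS := by
      linear_combination h0 + 2 * X * h1 + 2 * X * hc
    linear_combination h4 - 4 * X * hC * diagS 0
  have e1 : (1 - 2 * X * catS) * diagS 1 = catS := by
    linear_combination (1 - 2 * X * catS) * (h1 + hc) + 2 * e0 - 2 * hC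
  apply mul_left_cancel₀ (X_ne_zero : (X : ℤ⟦X⟧) ≠ 0)
  apply mul_left_cancel₀ (X_ne_zero : (X : ℤ⟦X⟧) ≠ 0)
  linear_combination (-X * h2 - h1) * (1 - 2 * X * catS) + (1 - X) * e1 - e0 + (1 + X * catS) * hC

theorem bona_series : PowerSeries.mk (fun n => (bona n : ℤ)) = X ^ 3 * diagS 3 := by
  ext n
  rw [coeff_X_pow_mul']
  simp only [bona, coeff_mk, diagS]
  split_ifs with h h' h'
  · omega
  · simp
  · rw [show 2 * (n - 3) + 3 = 2 * n - 3 by omega]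
  · omega

open Finset in
/-- The recurrence obtained from splitting a word of `n + 1` letters at its largest letter. It is
read off from `B = X (2BC + X (C - 1) C)`, with `B` the series of `bona`. -/
theorem bona_rec (n : ℕ) : bona (n + 1) =
    (∑ k ∈ range (n + 1), (bona k * catalan (n - k) + catalan k * bona (n - k))) +
      ∑ k ∈ Ico 1 n, catalan k * catalan (n - k - 1) := by
  set B : ℤ⟦X⟧ := PowerSeries.mk fun n => (bona n : ℤ) with hB
  have key : B = X * (B * catS + catS * B + X * ((catS - 1) * catS)) := by
    rw [hB, bona_series]
    linear_combination X ^ 3 * diagS_three - X ^ 2 * catS * catS_eq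
  have h := congrArg (coeff (n + 1)) key
  rw [coeff_succ_X_mul, map_add, map_add, coeff_mul, coeff_mul,
    Nat.sum_antidiagonal_eq_sum_range_succ_mk, Nat.sum_antidiagonal_eq_sum_range_succ_mk,
    ← sum_add_distrib] at h
  zify
  simp only [hB, catS, coeff_mk] at h
  rw [h]
  congr 1
  cases n with
  | zero => simp
  | succ m =>
    rw [coeff_succ_X_mul, coeff_mul, Nat.sum_antidiagonal_eq_sum_range_succ_mk,
      sum_range_eq_add_Ico _ (Nat.succ_pos m)]
    simp only [Nat.succ_eq_add_one]
    rw [show coeff 0 ((PowerSeries.mk fun n => (catalan n : ℤ)) - 1) = 0 by simp, zero_mul, zero_add]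
    apply sum_congr rfl
    intro k hk
    rw [mem_Ico] at hk
    rw [map_sub, coeff_one, if_neg (by omega), coeff_mk, coeff_mk, sub_zero,
      show m + 1 - k - 1 = m - k by omega]
end Series

/-! ### Words on a finite set of letters -/

section Words
open Finset
variable {α : Type*} [LinearOrder α]

/-- The words in which each element of `S` occurs exactly once and no other letter occurs. -/
def words (S : Finset α) : Finset (List α) :=
  ⟨S.val.lists, Multiset.lists_nodup_finset S⟩

omit [LinearOrder α] in
theorem mem_words {S : Finset α} {w : List α} : w ∈ words S ↔ w.Nodup ∧ ∀ x, x ∈ w ↔ x ∈ S := by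
  unfold words
  rw [Finset.mem_mk, Multiset.mem_lists_iff]
  constructor
  · intro h
    have h' : S.val = (w : Multiset α) := h
    refine ⟨?_, fun x => ?_⟩
    · have := S.nodup
      rw [h'] at this
      exact this
    · rw [← Finset.mem_val, h', Multiset.mem_coe]
  · rintro ⟨hn, h⟩
    exact (Multiset.Nodup.ext S.nodup (Multiset.coe_nodup.2 hn)).2 fun x => by
      rw [Multiset.mem_coe, Finset.mem_val, h]

open Classical in
/-- Words on `S ∋ M` correspond to triples of a set `A ⊆ S \ {M}`, a word `R` on `A` and a word `L`
on the remaining letters, through `w = L M R`. -/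
theorem card_filter_words {S : Finset α} {M : α} (hM : M ∈ S) (P : List α → Prop) :
    #{w ∈ words S | P w} = ∑ A ∈ (S.erase M).powerset,
      #{p ∈ words A ×ˢ words (S.erase M \ A) | P (p.2 ++ M :: p.1)} := by
  rw [← card_sigma]
  symm
  apply card_bij (fun (q : Σ _ : Finset α, List α × List α) _ => q.2.2 ++ M :: q.2.1)
  · rintro ⟨A, R, L⟩ h
    simp only [mem_sigma, mem_powerset, mem_filter, mem_product, mem_words, mem_sdiff,
      mem_erase] at h
    obtain ⟨hA, ⟨⟨hR, hR'⟩, hL, hL'⟩, hP⟩ := h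
    simp only [mem_filter, mem_words]
    refine ⟨⟨?_, fun x => ?_⟩, hP⟩
    · rw [List.nodup_append]
      refine ⟨hL, List.nodup_cons.2 ⟨?_, hR⟩, ?_⟩
      · intro h; simpa using hA ((hR' _).1 h)
      · intro a ha b hb
        have := (hL' a).1 ha
        rcases List.mem_cons.1 hb with rfl | hb
        · exact this.1.1
        · rintro rfl; exact this.2 ((hR' _).1 hb)
    · have := @hA x
      simp only [List.mem_append, List.mem_cons, hL', hR']
      rw [mem_erase] at this
      by_cases hx : x = M
      · simp [hx, hM]
      · tauto
  · rintro ⟨A, R, L⟩ h ⟨A', R', L'⟩ h' he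
    simp only [mem_sigma, mem_powerset, mem_filter, mem_product, mem_words, mem_sdiff,
      mem_erase] at h h'
    have h1 : M ∉ L := fun hm => ((h.2.1.2.2 M).1 hm).1.1 rfl
    have h2 : M ∉ L' := fun hm => ((h'.2.1.2.2 M).1 hm).1.1 rfl
    have h3 : M ∉ R := fun hm => by simpa using h.1 ((h.2.1.1.2 M).1 hm)
    have h4 : M ∉ R' := fun hm => by simpa using h'.1 ((h'.2.1.1.2 M).1 hm)
    simp only at he
    obtain ⟨rfl, rfl⟩ : L = L' ∧ R = R' := by
      rw [List.append_eq_append_iff] at he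
      rcases he with ⟨Z, rfl, hz⟩ | ⟨Z, rfl, hz⟩ <;> cases Z <;> simp_all
    have : A = A' := by
      ext x
      rw [← h.2.1.1.2, ← h'.2.1.1.2]
    subst this
    rfl
  · intro w hw
    rw [mem_filter, mem_words] at hw
    obtain ⟨⟨hn, hS⟩, hP⟩ := hw
    obtain ⟨L, R, rfl⟩ := List.append_of_mem ((hS M).2 hM)
    rw [List.nodup_append, List.nodup_cons] at hn
    obtain ⟨hL, ⟨hMR, hR⟩, hd⟩ := hn
    refine ⟨⟨R.toFinset, R, L⟩, ?_, rfl⟩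
    simp only [mem_sigma, mem_powerset, mem_filter, mem_product, mem_words, mem_sdiff,
      mem_erase, List.mem_toFinset]
    refine ⟨fun x hx => ?_, ⟨⟨hR, fun _ => by simp⟩, hL, fun x => ?_⟩, hP⟩
    · rw [List.mem_toFinset] at hx
      rw [mem_erase, ← hS]
      exact ⟨by rintro rfl; exact hMR hx, by simp [hx]⟩
    · rw [← hS, List.mem_append, List.mem_cons]
      constructor
      · intro hx
        refine ⟨⟨?_, .inl hx⟩, fun h => hd x hx x (by simp [h]) rfl⟩
        rintro rfl
        exact hd x hx x (by simp) rfl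
      · tauto

/-- `A` lies below the rest of `S`; for `A ⊆ S`, this says that `A` is an initial segment. -/
def IsLow (S A : Finset α) : Prop := ∀ x ∈ A, ∀ y ∈ S \ A, x < y

theorem exists_low (S : Finset α) {k : ℕ} (hk : k ≤ #S) : ∃ A ⊆ S, IsLow S A ∧ #A = k := by
  induction k with
  | zero => exact ⟨∅, by simp, by simp [IsLow], rfl⟩
  | succ k ih =>
    obtain ⟨A, hA, hl, hc⟩ := ih (by omega)
    have hne : (S \ A).Nonempty := by
      rw [← card_pos, card_sdiff_of_subset hA]; omega
    refine ⟨insert ((S \ A).min' hne) A, ?_, ?_, ?_⟩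
    · have := (S \ A).min'_mem hne
      rw [insert_subset_iff]
      exact ⟨(mem_sdiff.1 this).1, hA⟩
    · intro x hx y hy
      have hy' : y ∈ S \ A := by grind
      rcases mem_insert.1 hx with rfl | hx
      · exact lt_of_le_of_ne (min'_le _ _ hy') (by grind)
      · exact hl x hx y hy'
    · rw [card_insert_of_notMem, hc]
      have := (S \ A).min'_mem hne
      exact (mem_sdiff.1 this).2

theorem IsLow.unique {S A B : Finset α} (hA : A ⊆ S) (hB : B ⊆ S) (lA : IsLow S A) (lB : IsLow S B)
    (h : #A = #B) : A = B := by
  by_cases hs : A ⊆ B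
  · exact eq_of_subset_of_card_le hs h.ge
  · obtain ⟨a, ha, hab⟩ := not_subset.1 hs
    refine (eq_of_subset_of_card_le (fun b hb => ?_) h.le).symm
    by_contra hn
    exact lt_asymm (lB b hb a (by grind)) (lA a ha b (by grind))

open Classical in
/-- A finite set has one initial segment of each size. -/
theorem sum_low (S : Finset α) (f : ℕ → ℕ) :
    ∑ A ∈ S.powerset with IsLow S A, f #A = ∑ k ∈ range (#S + 1), f k := by
  apply sum_nbij (fun A => #A)
  · intro A hA
    simp only [mem_filter, mem_powerset] at hA
    simpa [Nat.lt_succ_iff] using card_le_card hA.1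
  · intro A hA B hB h
    simp only [coe_filter, mem_powerset, Set.mem_ofPred_eq] at hA hB
    exact hA.2.unique hA.1 hB.1 hB.2 h
  · intro k hk
    rw [mem_coe, mem_range] at hk
    obtain ⟨A, h1, h2, h3⟩ := exists_low S (k := k) (by omega)
    exact ⟨A, by simp [h1, h2], h3⟩
  · simp

/-- `A` is an initial segment of `S` up to a single inverted pair: only one `l ∈ S \ A` and
`r ∈ A` satisfy `l < r`. -/
def AlmostLow (S A : Finset α) : Prop := ∃ l r, UniquePair (· ∈ S \ A) (· ∈ A) l r

/-- Removing `r` or adding `l` turns an almost-initial segment into an initial one. -/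
theorem UniquePair.erase_low {S A : Finset α} {l r : α}
    (h : UniquePair (· ∈ S \ A) (· ∈ A) l r) :
    IsLow S (A.erase r) ∧ IsLow S (insert l A) := by
  obtain ⟨hl, hr, hlr, h⟩ := h
  constructor
  · intro x hx y hy
    rw [mem_erase] at hx
    by_cases hy' : y = r
    · subst hy'
      by_contra hlt
      have := h l x hl hx.2 (lt_of_lt_of_le hlr (not_lt.1 hlt))
      exact hx.1 this.2
    · by_contra hlt
      have hyA : y ∈ S \ A := by grind
      have hne : y ≠ x := by grind
      have := h y x hyA hx.2 (lt_of_le_of_ne (not_lt.1 hlt) hne)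
      exact hx.1 this.2
  · intro x hx y hy
    have hyA : y ∈ S \ A := by grind
    have hyl : y ≠ l := by grind
    have key : ∀ x ∈ A, x < y := by
      intro x hx
      by_contra hlt
      have hne : y ≠ x := by grind
      exact hyl (h y x hyA hx (lt_of_le_of_ne (not_lt.1 hlt) hne)).1
    rcases mem_insert.1 hx with rfl | hx
    · exact hlr.trans (key r hr)
    · exact key x hx

open Classical in
/-- There is one almost-initial segment of each size from `1` to `#S - 1`. -/
theorem sum_almostLow (S : Finset α) (f : ℕ → ℕ) :
    ∑ A ∈ S.powerset with AlmostLow S A, f #A = ∑ k ∈ Ico 1 #S, f k := by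
  apply sum_nbij (fun A => #A)
  · intro A hA
    simp only [mem_filter, mem_powerset] at hA
    obtain ⟨hA, l, r, hl, hr, -⟩ := hA
    rw [mem_Ico]
    refine ⟨card_pos.2 ⟨r, hr⟩, card_lt_card ⟨hA, fun h => ?_⟩⟩
    exact (mem_sdiff.1 hl).2 (h (mem_sdiff.1 hl).1)
  · intro A hA B hB h
    simp only [coe_filter, mem_powerset, Set.mem_ofPred_eq] at hA hB h
    obtain ⟨hA, l, r, hu⟩ := hA
    obtain ⟨hB, l', r', hu'⟩ := hB
    have hlA := mem_sdiff.1 hu.1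
    have hlB := mem_sdiff.1 hu'.1
    have h1 := (hu.erase_low).1.unique ((erase_subset _ _).trans hA)
      ((erase_subset _ _).trans hB) (hu'.erase_low).1
      (by rw [card_erase_of_mem hu.2.1, card_erase_of_mem hu'.2.1, h])
    have h2 := (hu.erase_low).2.unique (insert_subset hlA.1 hA)
      (insert_subset hlB.1 hB) (hu'.erase_low).2
      (by rw [card_insert_of_notMem hlA.2, card_insert_of_notMem hlB.2, h])
    -- `{l, r} = {l', r'}` as the difference of the two initial segments
    have hrr : r = r' := by
      have a1 := hu.2.2.1
      have a2 := hu'.2.2.1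
      have a3 : r ∈ A := hu.2.1
      have a4 : r' ∈ B := hu'.2.1
      have e1 := Finset.ext_iff.1 h1
      have e2 := Finset.ext_iff.1 h2
      simp only [mem_erase, mem_insert] at e1 e2
      have c1 : r = l' ∨ r = r' := by
        have := e1 r; have := e2 r; grind
      have c2 : r' = l ∨ r' = r := by
        have := e1 r'; have := e2 r'; grind
      rcases c1 with c1 | c1
      · rcases c2 with c2 | c2
        · subst c1 c2; exact absurd a1 a2.asymm
        · exact c2.symm
      · exact c1
    rw [← insert_erase (show r ∈ A from hu.2.1), h1, hrr, insert_erase (show r' ∈ B from hu'.2.1)]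
  · intro k hk
    rw [mem_coe, mem_Ico] at hk
    obtain ⟨B, hB, lB, cB⟩ := exists_low S (k := k - 1) (by omega)
    have hne : (S \ B).Nonempty := by
      rw [← card_pos, card_sdiff_of_subset hB]; omega
    -- the initial segment of size `k - 1`, then skip the next element `l` and take `r` after it
    set l := (S \ B).min' hne with hl
    have hlm : l ∈ S \ B := min'_mem _ _
    have hne' : ((S \ B).erase l).Nonempty := by
      rw [← card_pos, card_erase_of_mem hlm, card_sdiff_of_subset hB]; omega
    set r := ((S \ B).erase l).min' hne' with hr
    have hrm : r ∈ (S \ B).erase l := min'_mem _ _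
    have hrm' := mem_erase.1 hrm
    have hlr : l < r := lt_of_le_of_ne (min'_le _ _ hrm'.2) hrm'.1.symm
    refine ⟨insert r B, ?_, ?_⟩
    · simp only [coe_filter, mem_powerset, Set.mem_ofPred_eq]
      refine ⟨insert_subset (mem_sdiff.1 hrm'.2).1 hB, l, r, by grind, by simp, hlr, ?_⟩
      intro l' r' hl' hr' hlt
      have hl'm : l' ∈ S \ B := by grind
      have hr'r : r' = r := by
        rcases mem_insert.1 hr' with h | h
        · exact h
        · exact absurd hlt (lB r' h l' hl'm).asymm
      refine ⟨?_, hr'r⟩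
      by_contra hne
      have : r ≤ l' := min'_le _ _ (mem_erase.2 ⟨hne, hl'm⟩)
      exact absurd hlt (hr'r ▸ this.not_gt)
    · show #(insert r B) = k
      rw [card_insert_of_notMem (mem_sdiff.1 hrm'.2).2, cB]; omega
  · simp

/-! ### Counting -/

open Classical in
/-- The number of words on `S` avoiding 132. -/
noncomputable def numAvoid (S : Finset α) : ℕ := #{w ∈ words S | Avoids w}

open Classical in
/-- The number of words on `S` with exactly one occurrence of 132. -/
noncomputable def numOne (S : Finset α) : ℕ := #{w ∈ words S | ExOne w}

omit [LinearOrder α] in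
theorem words_empty : words (∅ : Finset α) = {[]} := by
  ext w
  rw [mem_words, mem_singleton]
  constructor
  · rintro ⟨-, h⟩
    exact List.eq_nil_iff_forall_not_mem.2 fun x hx => by simpa using (h x).1 hx
  · rintro rfl; simp

theorem not_occ_nil (a b c : α) : ¬ Occ [] a b c := by simp [Occ]

open Classical in
/-- The words `L M R` avoiding 132 in which `A` is the set of letters of `R`. -/
theorem fiber_avoid {S A : Finset α} {M : α} (hM : ∀ x ∈ S, x < M) (hA : A ⊆ S) :
    #{p ∈ words A ×ˢ words (S \ A) | Avoids (p.2 ++ M :: p.1)} =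
      if IsLow S A then numAvoid A * numAvoid (S \ A) else 0 := by
  have key : ∀ p ∈ words A ×ˢ words (S \ A), (Avoids (p.2 ++ M :: p.1) ↔
      IsLow S A ∧ Avoids p.1 ∧ Avoids p.2) := by
    rintro ⟨R, L⟩ hp
    simp only [mem_product, mem_words] at hp
    obtain ⟨⟨-, hR⟩, -, hL⟩ := hp
    rw [avoids_split (fun x hx => hM x (mem_sdiff.1 ((hL x).1 hx)).1)
      (fun x hx => hM x (hA ((hR x).1 hx)))]
    simp only [hR, hL, IsLow]
    refine and_congr_left fun _ => ⟨fun h x hx y hy => lt_of_le_of_ne (h x hx y hy) ?_,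
      fun h x hx y hy => (h x hx y hy).le⟩
    rintro rfl
    exact (mem_sdiff.1 hy).2 hx
  rw [filter_congr key]
  split_ifs with h
  · simp only [h, true_and, numAvoid]
    rw [← card_product, filter_product]
  · simp [h]

theorem max_erase_lt {S : Finset α} (hS : S.Nonempty) :
    ∀ x ∈ S.erase (S.max' hS), x < S.max' hS := fun x hx =>
  lt_of_le_of_ne (le_max' _ _ (mem_erase.1 hx).2) (mem_erase.1 hx).1

theorem numAvoid_eq (S : Finset α) : numAvoid S = catalan #S := by
  classical
  induction hn : #S using Nat.strong_induction_on generalizing S with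
  | _ n ih =>
  rcases S.eq_empty_or_nonempty with rfl | hS
  · subst hn
    rw [numAvoid, words_empty, filter_true_of_mem]
    · simp
    · intro w hw
      rw [mem_singleton] at hw
      subst hw
      exact not_occ_nil
  obtain ⟨m, rfl⟩ : ∃ m, n = m + 1 := ⟨n - 1, by have := hS.card_pos; omega⟩
  have hc : #(S.erase (S.max' hS)) = m := by rw [card_erase_of_mem (max'_mem _ _)]; omega
  rw [numAvoid, card_filter_words (max'_mem S hS),
    sum_congr rfl fun A hA => fiber_avoid (max_erase_lt hS) (mem_powerset.1 hA), ← sum_filter]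
  generalize S.erase (S.max' hS) = T at hc
  rw [sum_congr rfl (g := fun A => catalan #A * catalan (m - #A)),
    sum_low T fun k => catalan k * catalan (m - k), hc, catalan_succ,
    Finset.sum_range fun k => catalan k * catalan (m - k)]
  intro A hA
  simp only [mem_filter, mem_powerset] at hA
  have := card_le_card hA.1
  rw [ih #A (by omega) A rfl, ih #(T \ A) (by rw [card_sdiff_of_subset hA.1]; omega) _ rfl,
    card_sdiff_of_subset hA.1, hc]

open Classical in
/-- The words `L M R` with one occurrence of 132, the set `A` of letters of `R` lying below `L`: the
occurrence is in `R` or in `L`. -/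
theorem fiber_one_low {S A : Finset α} {M : α} (hM : ∀ x ∈ S, x < M) (hA : A ⊆ S)
    (h : IsLow S A) :
    #{p ∈ words A ×ˢ words (S \ A) | ExOne (p.2 ++ M :: p.1)} =
      numOne A * numAvoid (S \ A) + numAvoid A * numOne (S \ A) := by
  have key : ∀ p ∈ words A ×ˢ words (S \ A), (ExOne (p.2 ++ M :: p.1) ↔
      (ExOne p.1 ∧ Avoids p.2) ∨ (Avoids p.1 ∧ ExOne p.2)) := by
    rintro ⟨R, L⟩ hp
    simp only [mem_product, mem_words] at hp
    obtain ⟨⟨-, hR⟩, -, hL⟩ := hp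
    exact exOne_split_lower (fun x hx => hM x (mem_sdiff.1 ((hL x).1 hx)).1)
      (fun x hx => hM x (hA ((hR x).1 hx)))
      (fun x hx y hy => h x ((hR x).1 hx) y ((hL y).1 hy))
  rw [filter_congr key, filter_or, card_union_of_disjoint]
  · simp only [numAvoid, numOne]
    rw [← card_product, ← card_product, filter_product, filter_product]
  · rw [disjoint_filter]
    rintro p - ⟨⟨a, b, c, o, -⟩, -⟩ ⟨h, -⟩
    exact h a b c o

open Classical in
/-- The words `L M R` with one occurrence of 132, the set `A` of letters of `R` not lying below `L`:
the occurrence is `l M r`, and `L = X l` with `X` an arbitrary avoiding word on `S \ A \ {l}`. -/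
theorem fiber_one_not_low {S A : Finset α} {M : α} (hM : ∀ x ∈ S, x < M) (hA : A ⊆ S)
    (h : ¬ IsLow S A) :
    #{p ∈ words A ×ˢ words (S \ A) | ExOne (p.2 ++ M :: p.1)} =
      if AlmostLow S A then catalan #A * catalan (#S - #A - 1) else 0 := by
  have key : ∀ p ∈ words A ×ˢ words (S \ A), (ExOne (p.2 ++ M :: p.1) ↔
      ∃ l r, UniquePair (· ∈ S \ A) (· ∈ A) l r ∧ Avoids p.1 ∧
        ∃ X, p.2 = X ++ [l] ∧ Avoids X) := by
    rintro ⟨R, L⟩ hp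
    simp only [mem_product, mem_words] at hp
    obtain ⟨⟨-, hR⟩, hLn, hL⟩ := hp
    have := exOne_split_nonlower (R := R) (L := L)
      (fun x hx => hM x (mem_sdiff.1 ((hL x).1 hx)).1)
      (fun x hx => hM x (hA ((hR x).1 hx)))
      (fun x hx hx' => (mem_sdiff.1 ((hL x).1 hx)).2 ((hR x).1 hx')) hLn
      (by simpa only [hR, hL, IsLow] using h)
    rw [this]
    simp only [hR, hL]
  rw [filter_congr key]
  split_ifs with hal
  · obtain ⟨l, r, hu⟩ := hal
    have hlm : l ∈ S \ A := hu.1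
    have hcard : #((S \ A).erase l) = #S - #A - 1 := by
      rw [card_erase_of_mem hlm, card_sdiff_of_subset hA]
    rw [← hcard, ← numAvoid_eq, ← numAvoid_eq, numAvoid, numAvoid, ← card_product]
    symm
    apply card_bij (fun p _ => (p.1, p.2 ++ [l]))
    · rintro ⟨R, X⟩ hp
      simp only [mem_product, mem_filter, mem_words] at hp ⊢
      obtain ⟨⟨hR, hRa⟩, ⟨hX, hX'⟩, hXa⟩ := hp
      refine ⟨⟨hR, ?_, fun x => ?_⟩, l, r, hu, hRa, X, rfl, hXa⟩
      · rw [List.nodup_append]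
        refine ⟨hX, by simp, fun a ha b hb => ?_⟩
        rw [List.mem_singleton] at hb
        subst hb
        exact (mem_erase.1 ((hX' a).1 ha)).1
      · rw [List.mem_append, List.mem_singleton, hX', mem_erase]
        by_cases hx : x = l
        · simp only [hx, hlm]; simp
        · simp [hx]
    · rintro ⟨R, X⟩ _ ⟨R', X'⟩ _ he
      simpa using he
    · rintro ⟨R, L⟩ hp
      simp only [mem_product, mem_filter, mem_words] at hp
      obtain ⟨⟨hR, hLn, hL⟩, l', r', hu', hRa, X, rfl, hXa⟩ := hp
      obtain rfl : l' = l := (hu.2.2.2 l' r' hu'.1 hu'.2.1 hu'.2.2.1).1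
      rw [List.nodup_append] at hLn
      refine ⟨(R, X), ?_, rfl⟩
      simp only [mem_product, mem_filter, mem_words]
      refine ⟨⟨hR, hRa⟩, ⟨hLn.1, fun x => ?_⟩, hXa⟩
      rw [mem_erase, ← hL, List.mem_append, List.mem_singleton]
      have := hLn.2.2 x
      constructor
      · exact fun hx => ⟨this hx l' (by simp), .inl hx⟩
      · tauto
  · rw [card_eq_zero, filter_eq_empty_iff]
    rintro p - ⟨l, r, hu, -⟩
    exact hal ⟨l, r, hu⟩

theorem AlmostLow.not_isLow {S A : Finset α} (h : AlmostLow S A) : ¬ IsLow S A := by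
  obtain ⟨l, r, hl, hr, hlr, -⟩ := h
  exact fun h => (h r hr l hl).asymm hlr

theorem numOne_eq (S : Finset α) : numOne S = bona #S := by
  classical
  induction hn : #S using Nat.strong_induction_on generalizing S with
  | _ n ih =>
  rcases S.eq_empty_or_nonempty with rfl | hS
  · subst hn
    rw [numOne, words_empty, filter_false_of_mem]
    · simp [bona]
    · intro w hw
      rw [mem_singleton] at hw
      subst hw
      rintro ⟨a, b, c, o, -⟩
      exact not_occ_nil _ _ _ o
  obtain ⟨m, rfl⟩ : ∃ m, n = m + 1 := ⟨n - 1, by have := hS.card_pos; omega⟩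
  have hc : #(S.erase (S.max' hS)) = m := by rw [card_erase_of_mem (max'_mem _ _)]; omega
  have hlt := max_erase_lt hS
  rw [numOne, card_filter_words (max'_mem S hS)]
  generalize S.erase (S.max' hS) = T at hc hlt
  have key : ∀ A ∈ T.powerset,
      #{p ∈ words A ×ˢ words (T \ A) | ExOne (p.2 ++ S.max' hS :: p.1)} =
        (if IsLow T A then bona #A * catalan (m - #A) + catalan #A * bona (m - #A) else 0) +
        if AlmostLow T A then catalan #A * catalan (m - #A - 1) else 0 := by
    intro A hA
    rw [mem_powerset] at hA
    have := card_le_card hA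
    by_cases hl : IsLow T A
    · rw [fiber_one_low hlt hA hl, if_pos hl, if_neg fun h => h.not_isLow hl,
        numAvoid_eq, numAvoid_eq, ih #A (by omega) A rfl,
        ih #(T \ A) (by rw [card_sdiff_of_subset hA]; omega) _ rfl, card_sdiff_of_subset hA, hc,
        add_zero]
    · rw [fiber_one_not_low hlt hA hl, if_neg hl, hc, zero_add]
  rw [sum_congr rfl key, sum_add_distrib, ← sum_filter, ← sum_filter,
    sum_low T fun k => bona k * catalan (m - k) + catalan k * bona (m - k),
    sum_almostLow T fun k => catalan k * catalan (m - k - 1), hc, bona_rec]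
end Words

/-! ### From permutations to words -/

section Perm
variable {n : ℕ}

theorem sub3_ofFn {α : Type*} {f : Fin n → α} {a b c : α} :
    [a, b, c].Sublist (List.ofFn f) ↔
      ∃ i j k, i < j ∧ j < k ∧ f i = a ∧ f j = b ∧ f k = c := by
  rw [List.sublist_iff_exists_fin_orderEmbedding_get_eq]
  constructor
  · rintro ⟨g, hg⟩
    refine ⟨(g 0).cast (by simp), (g 1).cast (by simp), (g 2).cast (by simp), ?_, ?_, ?_, ?_, ?_⟩
    · have : g 0 < g 1 := g.lt_iff_lt.2 (by simp)
      exact this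
    · have : g 1 < g 2 := g.lt_iff_lt.2 (by simp [Fin.lt_def])
      exact this
    · have := hg 0; rw [List.get_ofFn] at this; exact this.symm
    · have := hg 1; rw [List.get_ofFn] at this; exact this.symm
    · have := hg 2; rw [List.get_ofFn] at this; exact this.symm
  · rintro ⟨i, j, k, hij, hjk, rfl, rfl, rfl⟩
    have e : n = (List.ofFn f).length := by simp
    have hm : StrictMono (![i.cast e, j.cast e, k.cast e] : Fin 3 → _) := by
      rw [Fin.strictMono_iff_lt_succ]
      intro x
      fin_cases x
      exacts [hij, hjk]
    refine ⟨OrderEmbedding.ofStrictMono _ hm, ?_⟩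
    intro x
    fin_cases x <;> simp

theorem occ132Count_eq_one (π : Equiv.Perm (Fin n)) :
    occ132Count n π = 1 ↔ ExOne (List.ofFn π) := by
  rw [occ132Count, Nat.card_eq_one_iff_exists]
  constructor
  · rintro ⟨⟨⟨i, j, k⟩, hij, hjk, h1, h2⟩, hu⟩
    refine ⟨π i, π j, π k, ⟨sub3_ofFn.2 ⟨i, j, k, hij, hjk, rfl, rfl, rfl⟩, h1, h2⟩, ?_⟩
    rintro a b c ⟨hs, ha, hb⟩
    obtain ⟨i', j', k', hij', hjk', rfl, rfl, rfl⟩ := sub3_ofFn.1 hs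
    have := hu ⟨⟨i', j', k'⟩, hij', hjk', ha, hb⟩
    simp only [Subtype.mk.injEq, Prod.mk.injEq] at this
    obtain ⟨rfl, rfl, rfl⟩ := this
    exact ⟨rfl, rfl, rfl⟩
  · rintro ⟨a, b, c, ⟨hs, ha, hb⟩, hu⟩
    obtain ⟨i, j, k, hij, hjk, rfl, rfl, rfl⟩ := sub3_ofFn.1 hs
    refine ⟨⟨⟨i, j, k⟩, hij, hjk, ha, hb⟩, ?_⟩
    rintro ⟨⟨i', j', k'⟩, hij', hjk', h1, h2⟩
    have := hu (π i') (π j') (π k') ⟨sub3_ofFn.2 ⟨i', j', k', hij', hjk', rfl, rfl, rfl⟩, h1, h2⟩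
    simpa using this

theorem card_perm_eq : Nat.card {π : Equiv.Perm (Fin n) // occ132Count n π = 1} =
    numOne (Finset.univ : Finset (Fin n)) := by
  classical
  rw [Nat.card_eq_fintype_card, Fintype.card_subtype, numOne]
  apply Finset.card_bij (fun (π : Equiv.Perm (Fin n)) _ => List.ofFn π)
  · intro π hπ
    rw [Finset.mem_filter] at hπ ⊢
    refine ⟨mem_words.2 ⟨List.nodup_ofFn.2 π.injective, fun x => ?_⟩,
      (occ132Count_eq_one π).1 hπ.2⟩
    simp only [List.mem_ofFn, Finset.mem_univ, iff_true]
    exact π.surjective x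
  · intro π _ σ _ h
    exact DFunLike.coe_injective (List.ofFn_injective h)
  · intro w hw
    rw [Finset.mem_filter, mem_words] at hw
    obtain ⟨⟨hn, hw⟩, h1⟩ := hw
    have hl : w.length = n := by
      rw [← List.toFinset_card_of_nodup hn]
      have : w.toFinset = Finset.univ := by ext x; simp [hw]
      rw [this]; simp
    have hi : Function.Injective fun i : Fin n => w.get (i.cast hl.symm) :=
      (List.nodup_iff_injective_get.1 hn).comp (Fin.cast_injective hl.symm)
    have e : List.ofFn (Equiv.ofBijective _ (Finite.injective_iff_bijective.1 hi)) = w :=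
      List.ext_getElem (by simp [hl]) (by simp)
    refine ⟨Equiv.ofBijective _ (Finite.injective_iff_bijective.1 hi), ?_, e⟩
    rw [Finset.mem_filter]
    exact ⟨Finset.mem_univ _, (occ132Count_eq_one _).2 (e.symm ▸ h1)⟩
end Perm

end Bona132

/-- (Bóna) For `n ≥ 3`, the number of permutations of `[n]` containing exactly one
occurrence of the pattern 132 is `C(2n-3, n-3)`. -/
theorem bona_one132_count (n : ℕ) (hn : 3 ≤ n) :
    Nat.card {π : Equiv.Perm (Fin n) // occ132Count n π = 1}
      = Nat.choose (2 * n - 3) (n - 3) := by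
  rw [Bona132.card_perm_eq, Bona132.numOne_eq, Finset.card_univ, Fintype.card_fin, Bona132.bona,
    if_neg (by omega)]
end

section
/- Let π be a permutation of [n] containing exactly one occurrence of the pattern 321, say with values c > b > a (c first, then b, then a in π). Then the set of letters occurring before b in π is exactly ({c} ∪ [b−1]) \ {a}; in particular, b occupies position b in π (b is a fixed point of π viewed as a bijection). -/
/-- Suppose a permutation `π` of `[n]` contains exactly one occurrence of the pattern
321, at positions `i < j < k` with values `c = π i > b = π j > a = π k`.  Then the set
of letters occurring before `b` in `π` is exactly `({c} ∪ [b-1]) \ {a}` (here `[b-1]`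
is the set of letters smaller than `b`); in particular `b` occupies position `b`,
i.e. `π j = j`. -/
theorem one321_letters_before_middle (n : ℕ) (π : Equiv.Perm (Fin n)) (i j k : Fin n)
    (huniq : occ321Count n π = 1)
    (hocc : i < j ∧ j < k ∧ π k < π j ∧ π j < π i) :
    (Finset.univ.filter (fun p : Fin n => p < j)).image π
        = insert (π i) (Finset.univ.filter (fun x : Fin n => x < π j)) \ {π k} ∧
    π j = j := by
  have hsub := (Nat.card_eq_one_iff_unique.mp huniq).1
  have key : ∀ p q r : Fin n, p < q → q < r → π r < π q → π q < π p → p = i ∧ r = k := by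
    intro p q r h1 h2 h3 h4
    have h := congrArg Subtype.val (hsub.elim ⟨(p, q, r), h1, h2, h3, h4⟩ ⟨(i, j, k), hocc⟩)
    simp only [Prod.mk.injEq] at h
    exact ⟨h.1, h.2.2⟩
  obtain ⟨hij, hjk, hkj, hji⟩ := hocc
  have hset : (Finset.univ.filter (fun p : Fin n => p < j)).image π
      = insert (π i) (Finset.univ.filter (fun x : Fin n => x < π j)) \ {π k} := by
    ext x
    obtain ⟨p, rfl⟩ := π.surjective x
    simp only [Finset.mem_image, Finset.mem_filter, Finset.mem_univ, true_and,
      EmbeddingLike.apply_eq_iff_eq, exists_eq_right, Finset.mem_sdiff, Finset.mem_insert,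
      Finset.mem_singleton]
    constructor
    · intro hp
      refine ⟨?_, (hp.trans hjk).ne⟩
      rcases lt_trichotomy (π p) (π j) with h | h | h
      · exact Or.inr h
      · exact absurd (π.injective h) hp.ne
      · exact Or.inl (key p j k hp hjk hkj h).1
    · rintro ⟨rfl | h, hpk⟩
      · exact hij
      · rcases lt_trichotomy p j with hp | rfl | hp
        · exact hp
        · exact absurd h (lt_irrefl _)
        · exact absurd (key i j p hij hp h hji).2 hpk
  refine ⟨hset, ?_⟩
  have hcard := congrArg Finset.card hset
  have hmem : {π k} ⊆ insert (π i) (Finset.univ.filter (fun x : Fin n => x < π j)) := by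
    simp [hkj]
  rw [Finset.card_image_of_injective _ π.injective, Finset.card_sdiff_of_subset hmem,
    Finset.card_insert_of_notMem (by simp [hji.le]), Finset.card_singleton,
    Finset.filter_gt_eq_Iio, Finset.filter_gt_eq_Iio, Fin.card_Iio, Fin.card_Iio] at hcard
  exact Fin.ext (by omega)
end
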